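/- arXiv:0902.3958 — 12 statements merged into one kernel-verified Lean document; each statement's English description precedes it below -/
import Mathlib

section
/- For every nondeterministic Büchi automaton A = ⟨L, ι, Σ, δ, α⟩ and all even numbers k', k with 0 ≤ k' ≤ k, L(KV(A, k')) ⊆ L(KV(A, k)); moreover, for k = 2(|L| − |α|), L(KV(A, k)) = Σ^ω \ L(A). -/
/-!
The proof is the rank analysis of Kupferman and Vardi, on the graph of pairs `(l, i)` (state, level)
of the runs of `M` on a word `w`.

*Monotonicity.* A run of `KV M k'` becomes a run of `KV M k` by relabelling its root: both root
ranks are even, so the root formula is never `false`, and a larger rank only allows more successors.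

*Soundness.* An accepting run of `M` on `w` could be followed inside an accepting run of `KV M k`.
The ranks along that path are non-increasing, hence eventually equal to some `c`; acceptance forces
`c` to be odd, and then a later visit to `M.acc` meets the formula `false`.

*Completeness.* Let `S 0` (`layer`) be the set of nodes from which no accepting path starts, and
alternately remove the nodes without an infinite path in the current set (`infPart`) and those that
cannot reach an accepting node in it (`reachPart`). The rank of a node is the index at which it
is removed. Ranks do not increase along edges, odd-ranked nodes are not accepting, and no infinite
path keeps an even rank. If a set `infPart (S (2j))` is non-empty, it has a node that cannot reach
an accepting node (otherwise an accepting path could be built, `exists_buchi_path`), and the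
infinite path from this node consists of non-accepting nodes that disappear in `S (2j+2)`. So the
number of non-accepting states per level eventually drops by one in each round
(`layer_width`), and after `|L| - |α|` rounds no infinite path remains.
-/

/-- A nondeterministic Büchi automaton (NBW) over states `Q` and alphabet `A`:
an initial state, a transition function `δ : Q × A → 2^Q` and accepting states. -/
structure NBW (Q : Type*) (A : Type*) where
  init : Q
  delta : Q → A → Set Q
  acc : Set Q

namespace NBW

variable {Q A : Type*}

/-- A run of an NBW on the infinite word `w`. -/
def IsRun (M : NBW Q A) (w : ℕ → A) (ρ : ℕ → Q) : Prop :=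
  ρ 0 = M.init ∧ ∀ i, ρ (i + 1) ∈ M.delta (ρ i) (w i)

/-- The language of an NBW: words having a run visiting accepting states infinitely often. -/
def Lang (M : NBW Q A) : Set (ℕ → A) :=
  {w | ∃ ρ, M.IsRun w ρ ∧ ∀ n, ∃ i ≥ n, ρ i ∈ M.acc}

/-- `Pre_σ(S)`: the σ-predecessors of the set `S`. -/
def PreSigma (M : NBW Q A) (σ : A) (S : Set Q) : Set Q :=
  {l | ∃ l' ∈ S, l' ∈ M.delta l σ}

/-- `Pre(S) = ⋃_σ Pre_σ(S)`. -/
def Pre (M : NBW Q A) (S : Set Q) : Set Q :=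
  {l | ∃ σ, ∃ l' ∈ S, l' ∈ M.delta l σ}

/-- A pre-order `r` is a simulation for the NBW `M`. -/
def Simulation (M : NBW Q A) (r : Q → Q → Prop) : Prop :=
  (∀ l1 l2 l3 σ, r l3 l1 → l2 ∈ M.delta l1 σ →
      ∃ l4, r l4 l2 ∧ l4 ∈ M.delta l3 σ) ∧
  (∀ l ∈ M.acc, ∀ l', r l' l → l' ∈ M.acc)

end NBW

/-- A set `S` is `r`-(downward-)closed. -/
def RClosed {Q : Type*} (r : Q → Q → Prop) (S : Set Q) : Prop :=
  ∀ l1 l2, r l1 l2 → l2 ∈ S → l1 ∈ S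
/-- Positive boolean formulas over `Q`, built from `Q ∪ {true, false}` with `∧`, `∨`. -/
inductive PosBool (Q : Type*) where
  | tru : PosBool Q
  | fls : PosBool Q
  | var (q : Q) : PosBool Q
  | and (φ ψ : PosBool Q) : PosBool Q
  | or (φ ψ : PosBool Q) : PosBool Q

/-- `X ⊨ φ`: the assignment making exactly the members of `X` true satisfies `φ`. -/
def PosBool.Sat {Q : Type*} (X : Set Q) : PosBool Q → Prop
  | .tru => True
  | .fls => False
  | .var q => q ∈ X
  | .and φ ψ => φ.Sat X ∧ ψ.Sat X
  | .or φ ψ => φ.Sat X ∨ ψ.Sat X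

/-- An alternating Büchi automaton (ABW). -/
structure ABW (Q : Type*) (A : Type*) where
  init : Q
  delta : Q → A → PosBool Q
  acc : Set Q

namespace ABW

variable {Q A : Type*}

/-- A run of an ABW on the word `w`: a DAG on `Q × ℕ` rooted at `(ι, 0)`; edges go from
level `i` to level `i+1`, and at every node of the run (reachable from the root) the set
of successors satisfies the transition formula. -/
def IsRun (M : ABW Q A) (w : ℕ → A) (E : Q × ℕ → Q × ℕ → Prop) : Prop :=
  (∀ p q, E p q → q.2 = p.2 + 1) ∧
  (∀ l i, Relation.ReflTransGen E (M.init, 0) (l, i) →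
      PosBool.Sat {l' | E (l, i) (l', i + 1)} (M.delta l (w i)))

/-- A run is accepting iff every infinite path from the root visits α-nodes infinitely often. -/
def Accepting (M : ABW Q A) (w : ℕ → A) (E : Q × ℕ → Q × ℕ → Prop) : Prop :=
  ∀ π : ℕ → Q × ℕ, π 0 = (M.init, 0) → (∀ i, E (π i) (π (i + 1))) →
    ∀ n, ∃ i ≥ n, (π i).1 ∈ M.acc

/-- The language of an ABW. -/
def Lang (M : ABW Q A) : Set (ℕ → A) :=
  {w | ∃ E, M.IsRun w E ∧ M.Accepting w E}

end ABW

/-- Finite conjunction of formulas. -/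
def bigAnd {β Q : Type*} (L : List β) (f : β → PosBool Q) : PosBool Q :=
  L.foldr (fun b acc => (f b).and acc) .tru

/-- Finite disjunction of formulas. -/
def bigOr {β Q : Type*} (L : List β) (f : β → PosBool Q) : PosBool Q :=
  L.foldr (fun b acc => (f b).or acc) .fls

-- The Kupferman-Vardi construction `KV(M, k)`: an ABW over `L × [k]` with initial
-- state `(ι, k)`, accepting states `L × [k]^odd`, and
-- `δ'((l,i),σ) = false` if `l ∈ α` and `i` odd, and
-- `δ'((l,i),σ) = ⋀_{l' ∈ δ(l,σ)} ⋁_{i' ≤ i} (l',i')` otherwise.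
open Classical in
noncomputable def KV {Q A : Type*} [Fintype Q] (M : NBW Q A) (k : ℕ) : ABW (Q × ℕ) A where
  init := (M.init, k)
  delta := fun p σ =>
    if p.1 ∈ M.acc ∧ Odd p.2 then PosBool.fls
    else bigAnd ((M.delta p.1 σ).toFinite.toFinset.toList) fun l' =>
           bigOr (List.range (p.2 + 1)) fun i' => PosBool.var (l', i')
  acc := {p | Odd p.2 ∧ p.2 ≤ k}

/-! ### Satisfaction of the transition formulas of `KV` -/

theorem sat_bigAnd {β Q : Type*} (X : Set Q) (L : List β) (f : β → PosBool Q) :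
    (bigAnd L f).Sat X ↔ ∀ b ∈ L, (f b).Sat X := by
  induction L with
  | nil => simp [bigAnd, PosBool.Sat]
  | cons a L ih =>
    simp only [List.mem_cons, forall_eq_or_imp, ← ih]
    rfl

theorem sat_bigOr {β Q : Type*} (X : Set Q) (L : List β) (f : β → PosBool Q) :
    (bigOr L f).Sat X ↔ ∃ b ∈ L, (f b).Sat X := by
  induction L with
  | nil => simp [bigOr, PosBool.Sat]
  | cons a L ih =>
    simp only [List.mem_cons, exists_eq_or_imp, ← ih]
    rfl

theorem sat_KV {Q A : Type*} [Fintype Q] (M : NBW Q A) (k : ℕ) (X : Set (Q × ℕ))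
    (l : Q) (r : ℕ) (σ : A) :
    ((KV M k).delta (l, r) σ).Sat X ↔
      ¬ (l ∈ M.acc ∧ Odd r) ∧ ∀ l' ∈ M.delta l σ, ∃ r' ≤ r, (l', r') ∈ X := by
  by_cases h : l ∈ M.acc ∧ Odd r
  · simp [KV, h, PosBool.Sat]
  · simp only [KV, if_neg h, sat_bigAnd, sat_bigOr]
    simp [h, PosBool.Sat]

theorem antitone_stabilizes (r : ℕ → ℕ) (h : ∀ i, r (i + 1) ≤ r i) :
    ∃ N, ∀ i ≥ N, r i = r N := by
  have ha : Antitone r := antitone_nat_of_succ_le h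
  obtain ⟨N, hN⟩ := Nat.sInf_mem (Set.range_nonempty r)
  exact ⟨N, fun i hi => le_antisymm (ha hi) (hN ▸ Nat.sInf_le ⟨i, rfl⟩)⟩

/-! ### Monotonicity in the rank bound -/

theorem KV_mono {Q A : Type*} [Fintype Q] (M : NBW Q A) {k' k : ℕ} (hk : Even k)
    (hle : k' ≤ k) : (KV M k').Lang ⊆ (KV M k).Lang := by
  classical
  rintro w ⟨E, ⟨hE, hsat⟩, hacc⟩
  refine ⟨fun p q => if p = ((M.init, k), 0) then E ((M.init, k'), 0) q else E p q,
    ⟨?_, ?_⟩, ?_⟩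
  · intro p q h
    split_ifs at h with hp
    · rw [hE _ _ h, hp]
    · exact hE _ _ h
  · -- a node of the new run is either its root or a node of the old run
    have key : ∀ x, Relation.ReflTransGen
        (fun p q => if p = ((M.init, k), 0) then E ((M.init, k'), 0) q else E p q)
        ((M.init, k), 0) x →
        x = ((M.init, k), 0) ∨ Relation.ReflTransGen E ((M.init, k'), 0) x := by
      intro x hx
      induction hx with
      | refl => exact Or.inl rfl
      | tail _ h ih =>
        right
        split_ifs at h with hp
        · exact .single h
        · exact (ih.resolve_left hp).tail h
    rintro ⟨l, r⟩ i hreach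
    by_cases hp : ((l, r), i) = ((M.init, k), 0)
    · simp only [Prod.mk.injEq] at hp
      obtain ⟨⟨rfl, rfl⟩, rfl⟩ := hp
      have := hsat (M.init, k') 0 .refl
      rw [sat_KV] at this ⊢
      refine ⟨fun h => (Nat.not_odd_iff_even.2 hk) h.2, fun l' hl' => ?_⟩
      obtain ⟨r', hr', h⟩ := this.2 l' hl'
      exact ⟨r', hr'.trans hle, by simpa using h⟩
    · have := hsat (l, r) i ((key _ hreach).resolve_left hp)
      rw [sat_KV] at this ⊢
      simpa only [if_neg hp] using this
  · intro π h0 hstep n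
    have hlev : ∀ i, (π i).2 = i := by
      intro i
      induction i with
      | zero => rw [h0]
      | succ i ih =>
        have h := hstep i
        beta_reduce at h
        split_ifs at h with hp
        · rw [hE _ _ h, ← ih, hp]
        · rw [hE _ _ h, ih]
    -- relabel the root of the path and use acceptance of the old run
    obtain ⟨i, hi, hodd⟩ := hacc (fun i => if i = 0 then ((M.init, k'), 0) else π i) rfl (by
      intro i
      have h := hstep i
      beta_reduce at h
      rcases Nat.eq_zero_or_pos i with rfl | hi
      · rw [if_pos (show π 0 = ((M.init, k), 0) from h0)] at h
        simpa using h
      · have hp : π i ≠ ((M.init, k), 0) := by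
          intro e
          have := hlev i
          rw [e] at this
          simp only at this
          omega
        rw [if_neg hp] at h
        simpa [hi.ne'] using h) (n + 1)
    have hi0 : i ≠ 0 := by omega
    simp only [hi0, if_false] at hodd
    exact ⟨i, by omega, hodd.1, hodd.2.trans hle⟩

/-! ### Soundness -/

theorem KV_sound {Q A : Type*} [Fintype Q] (M : NBW Q A) (k : ℕ) :
    (KV M k).Lang ⊆ M.Langᶜ := by
  rintro w ⟨E, ⟨-, hsat⟩, hacc⟩ ⟨ρ, ⟨hρ0, hρ⟩, hinf⟩
  have hnext : ∀ i r, ∃ r', Relation.ReflTransGen E ((M.init, k), 0) ((ρ i, r), i) →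
      r' ≤ r ∧ E ((ρ i, r), i) ((ρ (i + 1), r'), i + 1) := by
    intro i r
    by_cases h : Relation.ReflTransGen E ((M.init, k), 0) ((ρ i, r), i)
    · obtain ⟨r', hr', hE⟩ := ((sat_KV ..).1 (hsat _ _ h)).2 _ (hρ i)
      exact ⟨r', fun _ => ⟨hr', hE⟩⟩
    · exact ⟨0, fun h' => absurd h' h⟩
  choose nxt hnxt using hnext
  let r : ℕ → ℕ := fun i => Nat.rec k (fun i r => nxt i r) i
  have hreach : ∀ i, Relation.ReflTransGen E ((M.init, k), 0) ((ρ i, r i), i) := by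
    intro i
    induction i with
    | zero => rw [hρ0]; exact .refl
    | succ i ih => exact ih.tail (hnxt i (r i) ih).2
  obtain ⟨N, hN⟩ := antitone_stabilizes r fun i => (hnxt i (r i) (hreach i)).1
  obtain ⟨i, hi, hodd⟩ := hacc (fun i => ((ρ i, r i), i)) (by simp [hρ0, r, KV])
    (fun i => (hnxt i (r i) (hreach i)).2) N
  obtain ⟨j, hj, hja⟩ := hinf N
  refine ((sat_KV ..).1 (hsat _ _ (hreach j))).1 ⟨hja, ?_⟩
  rw [hN j hj, ← hN i hi]
  exact hodd.1

/-! ### Ranks in a graph with accepting nodes -/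

section Graph

variable {V : Type*} (step : V → V → Prop) (acc : Set V)

/-- An infinite path of the graph starting in `v`. -/
def IsPath (v : V) (π : ℕ → V) : Prop := π 0 = v ∧ ∀ n, step (π n) (π (n + 1))

/-- The nodes from which an infinite path inside `T` starts. -/
def infPart (T : Set V) : Set V := {v | ∃ π, IsPath step v π ∧ ∀ n, π n ∈ T}

/-- `ReachIn step acc T n v`: some path of length `n` inside `T` leads from `v` to an accepting
node. -/
def ReachIn (T : Set V) : ℕ → V → Prop
  | 0, v => v ∈ T ∧ v ∈ acc
  | n + 1, v => v ∈ T ∧ ∃ u, step v u ∧ ReachIn T n u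

/-- The nodes of `T` that can reach an accepting node inside `T`. -/
def reachPart (T : Set V) : Set V := {v | ∃ n, ReachIn step acc T n v}

/-- The nodes from which no infinite path with infinitely many accepting nodes starts. -/
def nonBuchi : Set V := {v | ¬ ∃ π, IsPath step v π ∧ ∀ n, ∃ i ≥ n, π i ∈ acc}

open Classical in
/-- The decreasing sequence of sets of the rank analysis: starting from `nonBuchi`, apply
`infPart` and `reachPart` alternately. -/
noncomputable def layer : ℕ → Set V
  | 0 => nonBuchi step acc
  | n + 1 => if Even n then infPart step (layer n) else reachPart step acc (layer n)

/-- The rank of a node: the index of the layer from which it is removed. The value is meaningful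
only for nodes of `nonBuchi` that do get removed (it is the junk value `0` for others). -/
noncomputable def layerRank (v : V) : ℕ := sInf {n | v ∉ layer step acc (n + 1)}

variable {step acc}

theorem infPart_subset {T : Set V} : infPart step T ⊆ T := by
  rintro v ⟨π, ⟨rfl, -⟩, h⟩
  exact h 0

theorem reachPart_subset {T : Set V} : reachPart step acc T ⊆ T := by
  rintro v ⟨n | n, h⟩
  · exact h.1
  · exact h.1

theorem layer_even {n : ℕ} (h : Even n) :
    layer step acc (n + 1) = infPart step (layer step acc n) := by
  simp [layer, h]

theorem layer_odd {n : ℕ} (h : ¬ Even n) :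
    layer step acc (n + 1) = reachPart step acc (layer step acc n) := by
  simp [layer, h]

theorem layer_antitone : Antitone (layer step acc) := by
  refine antitone_nat_of_succ_le fun n => ?_
  by_cases h : Even n
  · rw [layer_even h]; exact infPart_subset
  · rw [layer_odd h]; exact reachPart_subset

theorem infPart_tail {T : Set V} {v : V} {π : ℕ → V} (hπ : IsPath step v π)
    (hT : ∀ n, π n ∈ T) (n : ℕ) : π n ∈ infPart step T :=
  ⟨fun i => π (n + i), ⟨rfl, fun i => hπ.2 (n + i)⟩, fun i => hT (n + i)⟩

/-- Prepends a node to an infinite path. -/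
theorem IsPath.cons {v v' : V} {π : ℕ → V} (h : step v v') (hπ : IsPath step v' π) :
    IsPath step v (fun n => Nat.casesOn n v π) := by
  refine ⟨rfl, fun n => ?_⟩
  cases n with
  | zero => simpa [hπ.1] using h
  | succ n => exact hπ.2 n

theorem nonBuchi_step {v v' : V} (hv : v ∈ nonBuchi step acc) (h : step v v') :
    v' ∈ nonBuchi step acc := by
  rintro ⟨π, hπ, hinf⟩
  refine hv ⟨_, hπ.cons h, fun n => ?_⟩
  obtain ⟨i, hi, hia⟩ := hinf n
  exact ⟨i + 1, by omega, hia⟩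

theorem layer_pred {v v' : V} (hv : v ∈ nonBuchi step acc) (h : step v v') :
    ∀ n, v' ∈ layer step acc n → v ∈ layer step acc n := by
  intro n
  induction n with
  | zero => exact fun _ => hv
  | succ n ih =>
    intro hv'
    have hvn := ih (layer_antitone n.le_succ hv')
    by_cases hn : Even n
    · rw [layer_even hn] at hv' ⊢
      obtain ⟨π, hπ, hT⟩ := hv'
      refine ⟨_, hπ.cons h, fun i => ?_⟩
      cases i with
      | zero => exact hvn
      | succ i => exact hT i
    · rw [layer_odd hn] at hv' ⊢
      obtain ⟨m, hm⟩ := hv'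
      exact ⟨m + 1, hvn, v', h, hm⟩

/-- If every node of a set `X` has a successor in `X` and can reach an accepting node in `X`,
then a Büchi path starts in each node of `X`: always decrease the distance to `acc`. -/
theorem exists_buchi_path {X : Set V} (hsucc : ∀ v ∈ X, ∃ v' ∈ X, step v v')
    (hreach : ∀ v ∈ X, v ∈ reachPart step acc X) {v : V} (hv : v ∈ X) :
    ∃ π, IsPath step v π ∧ ∀ n, ∃ i ≥ n, π i ∈ acc := by
  let d : V → ℕ := fun v => sInf {n | ReachIn step acc X n v}
  have hnext : ∀ v : X, ∃ v' : X, step v v' ∧ (v.1 ∈ acc ∨ d v' < d v) := by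
    rintro ⟨v, hv⟩
    have hd : ReachIn step acc X (d v) v := Nat.sInf_mem (hreach v hv)
    rcases hdv : d v with _ | m
    · rw [hdv] at hd
      obtain ⟨v', hv', hs⟩ := hsucc v hv
      exact ⟨⟨v', hv'⟩, hs, Or.inl hd.2⟩
    · rw [hdv] at hd
      obtain ⟨-, v', hs, hm⟩ := hd
      refine ⟨⟨v', reachPart_subset ⟨m, hm⟩⟩, hs, Or.inr ?_⟩
      have : d v' ≤ m := Nat.sInf_le hm
      simp only
      omega
  choose nxt hstep hdec using hnext
  refine ⟨fun n => (nxt^[n] ⟨v, hv⟩ : X), ⟨rfl, fun n => ?_⟩, ?_⟩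
  · dsimp only
    rw [Function.iterate_succ_apply']
    exact hstep _
  · have key : ∀ m n, d (nxt^[n] ⟨v, hv⟩ : X) ≤ m →
        ∃ i ≥ n, (nxt^[i] ⟨v, hv⟩ : X).1 ∈ acc := by
      intro m
      induction m with
      | zero =>
        intro n hn
        rcases hdec (nxt^[n] ⟨v, hv⟩) with h | h
        · exact ⟨n, le_rfl, h⟩
        · omega
      | succ m ih =>
        intro n hn
        rcases hdec (nxt^[n] ⟨v, hv⟩) with h | h
        · exact ⟨n, le_rfl, h⟩
        · rw [← Function.iterate_succ_apply' nxt] at h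
          obtain ⟨i, hi, hia⟩ := ih (n + 1) (Nat.le_of_lt_succ (h.trans_le hn))
          exact ⟨i, by omega, hia⟩
    exact fun n => key _ n le_rfl

/-- A non-empty `infPart` of a layer contains an infinite path, all of whose nodes are
non-accepting and cannot reach an accepting node inside it. -/
theorem exists_acc_free_path {n : ℕ} (hne : (infPart step (layer step acc n)).Nonempty) :
    ∃ v π, IsPath step v π ∧ (∀ i, π i ∈ layer step acc n) ∧ (∀ i, π i ∉ acc) ∧
      ∀ i, π i ∉ reachPart step acc (infPart step (layer step acc n)) := by
  set X := infPart step (layer step acc n) with hX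
  obtain ⟨v, hv, hvr⟩ : ∃ v ∈ X, v ∉ reachPart step acc X := by
    by_contra! hall
    obtain ⟨v, hv⟩ := hne
    refine layer_antitone (Nat.zero_le n) (infPart_subset hv)
      (exists_buchi_path (X := X) ?_ hall hv)
    rintro u ⟨π, hπ, hT⟩
    exact ⟨π 1, infPart_tail hπ hT 1, hπ.1 ▸ hπ.2 0⟩
  obtain ⟨π, hπ, hT⟩ := hv
  have hXπ : ∀ i, π i ∈ X := infPart_tail hπ hT
  have hnr : ∀ i, π i ∉ reachPart step acc X := by
    intro i
    induction i with
    | zero => rwa [hπ.1]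
    | succ i ih =>
      rintro ⟨m, hm⟩
      exact ih ⟨m + 1, hXπ i, _, hπ.2 i, hm⟩
  exact ⟨v, π, hπ, hT, fun i hi => hnr i ⟨0, hXπ i, hi⟩, hnr⟩

theorem layerRank_le {v : V} {n : ℕ} (h : layer step acc (n + 1) = ∅) : layerRank step acc v ≤ n :=
  Nat.sInf_le (by simp [h])

theorem mem_layer_rank {v : V} (hv : v ∈ nonBuchi step acc) :
    v ∈ layer step acc (layerRank step acc v) := by
  rcases h : layerRank step acc v with _ | c
  · exact hv
  · by_contra hc
    have : layerRank step acc v ≤ c := Nat.sInf_le hc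
    omega

theorem notMem_layer_rank_succ {n : ℕ} (h : layer step acc (n + 1) = ∅) (v : V) :
    v ∉ layer step acc (layerRank step acc v + 1) :=
  Nat.sInf_mem (s := {n | v ∉ layer step acc (n + 1)}) ⟨n, by simp [h]⟩

theorem rank_step {n : ℕ} (h : layer step acc (n + 1) = ∅) {v v' : V}
    (hv : v ∈ nonBuchi step acc) (hs : step v v') : layerRank step acc v' ≤ layerRank step acc v :=
  Nat.sInf_le fun h' => notMem_layer_rank_succ h v (layer_pred hv hs _ h')

theorem notMem_acc_of_odd_rank {n : ℕ} (h : layer step acc (n + 1) = ∅) {v : V}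
    (hv : v ∈ nonBuchi step acc) (ho : Odd (layerRank step acc v)) : v ∉ acc := by
  intro ha
  apply notMem_layer_rank_succ h v
  rw [layer_odd (Nat.not_even_iff_odd.2 ho)]
  exact ⟨0, mem_layer_rank hv, ha⟩

theorem odd_of_constant_rank {n : ℕ} (h : layer step acc (n + 1) = ∅) {v : V} {π : ℕ → V}
    (hπ : IsPath step v π) (hv : ∀ i, π i ∈ nonBuchi step acc)
    (hc : ∀ i, layerRank step acc (π i) = layerRank step acc v) : Odd (layerRank step acc v) := by
  by_contra ho
  apply notMem_layer_rank_succ h v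
  rw [layer_even (Nat.not_odd_iff_even.1 ho)]
  exact ⟨π, hπ, fun i => hc i ▸ mem_layer_rank (hv i)⟩

end Graph

/-! ### The run graph of an automaton on a word -/

section RunGraph

variable {Q A : Type*} (M : NBW Q A) (w : ℕ → A)

/-- The edges of the run graph of `M` on `w`, on pairs of a state and a level. -/
def runStep (p q : Q × ℕ) : Prop := q.2 = p.2 + 1 ∧ q.1 ∈ M.delta p.1 (w p.2)

/-- The nodes of the run graph whose state is accepting. -/
def runAcc : Set (Q × ℕ) := {p | p.1 ∈ M.acc}

variable {M w}

theorem runStep_level {v : Q × ℕ} {π : ℕ → Q × ℕ} (hπ : IsPath (runStep M w) v π) (i : ℕ) :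
    (π i).2 = v.2 + i := by
  induction i with
  | zero => rw [hπ.1]; rfl
  | succ i ih => rw [(hπ.2 i).1, ih]; rfl

theorem init_mem_nonBuchi (hw : w ∉ M.Lang) :
    (M.init, 0) ∈ nonBuchi (runStep M w) (runAcc M) := by
  rintro ⟨π, hπ, hinf⟩
  refine hw ⟨fun i => (π i).1, ⟨by simp [hπ.1], fun i => ?_⟩, hinf⟩
  have := (hπ.2 i).2
  rwa [runStep_level hπ i, Nat.zero_add] at this

variable [Fintype Q]

variable (M w) in
/-- Unless no infinite path is left after `j` rounds, each of these rounds has removed at least one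
non-accepting state from all sufficiently high levels. -/
theorem layer_width (j : ℕ) :
    infPart (runStep M w) (layer (runStep M w) (runAcc M) (2 * j)) = ∅ ∨
    ∃ N, ∀ i ≥ N, {l | l ∉ M.acc ∧ (l, i) ∈ layer (runStep M w) (runAcc M) (2 * j)}.ncard + j
      ≤ M.accᶜ.ncard := by
  induction j with
  | zero =>
    exact Or.inr ⟨0, fun i _ => Set.ncard_le_ncard (fun l hl => hl.1) (Set.toFinite _)⟩
  | succ j ih =>
    have hlayer : layer (runStep M w) (runAcc M) (2 * (j + 1)) =
        reachPart (runStep M w) (runAcc M)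
          (infPart (runStep M w) (layer (runStep M w) (runAcc M) (2 * j))) := by
      rw [show 2 * (j + 1) = (2 * j + 1) + 1 by ring,
        layer_odd (by simp), layer_even (by simp)]
    rcases Set.eq_empty_or_nonempty
      (infPart (runStep M w) (layer (runStep M w) (runAcc M) (2 * j))) with he | hne
    · left
      refine Set.eq_empty_of_subset_empty fun v hv => ?_
      have := infPart_subset hv
      rw [hlayer] at this
      simpa [he] using reachPart_subset this
    · right
      obtain ⟨N, hN⟩ := ih.resolve_left hne.ne_empty
      obtain ⟨v, π, hπ, hT, hna, hnr⟩ := exists_acc_free_path hne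
      refine ⟨max N v.2, fun i hi => ?_⟩
      have hiN := hN i (le_of_max_le_left hi)
      -- the state at level `i` of the path disappears in this round
      obtain ⟨n, rfl⟩ := Nat.exists_eq_add_of_le (le_of_max_le_right hi)
      have hpn : ((π n).1, v.2 + n) = π n := by rw [← runStep_level hπ n]
      refine le_trans ?_ hiN
      rw [← Nat.add_assoc, Nat.add_right_comm]
      refine Nat.add_le_add_right (Nat.succ_le_of_lt (Set.ncard_lt_ncard ?_ (Set.toFinite _))) j
      refine ⟨fun l hl => ⟨hl.1, layer_antitone (by omega) hl.2⟩, fun hsub => ?_⟩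
      have hmem := (hsub (a := (π n).1) ⟨hna n, hpn ▸ hT n⟩).2
      rw [hpn, hlayer] at hmem
      exact hnr n hmem

variable (M w) in
theorem layer_eventually_empty :
    layer (runStep M w) (runAcc M) (2 * M.accᶜ.ncard + 1) = ∅ := by
  rw [layer_even (by simp)]
  rcases layer_width M w M.accᶜ.ncard with h | ⟨N, hN⟩
  · exact h
  · refine Set.eq_empty_of_subset_empty ?_
    rintro v ⟨π, hπ, hT⟩
    refine layer_antitone (Nat.zero_le _) (hπ.1 ▸ hT 0) ⟨π, hπ, fun n => ?_⟩
    -- beyond level `N` only accepting states are left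
    refine ⟨n + N, by omega, ?_⟩
    by_contra hna
    have hlev := runStep_level hπ (n + N)
    have h0 := hN (π (n + N)).2 (by omega)
    have h0 : {l | l ∉ M.acc ∧ (l, (π (n + N)).2) ∈
        layer (runStep M w) (runAcc M) (2 * M.accᶜ.ncard)}.ncard = 0 := by omega
    rw [Set.ncard_eq_zero (Set.toFinite _)] at h0
    exact (Set.ext_iff.1 h0 (π (n + N)).1).1 ⟨hna, hT (n + N)⟩

variable (M) in
theorem KV_complete : M.Langᶜ ⊆ (KV M (2 * M.accᶜ.ncard)).Lang := by
  intro w hw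
  have hemp := layer_eventually_empty M w
  set k := 2 * M.accᶜ.ncard with hk
  have hinit := init_mem_nonBuchi hw
  set G := nonBuchi (runStep M w) (runAcc M) with hG
  -- the root must carry the even rank `k`, which may exceed its rank in the run graph
  let f : Q × ℕ → ℕ := fun v => if v.2 = 0 then k else layerRank (runStep M w) (runAcc M) v
  have hfk : ∀ v, f v ≤ k := by
    intro v
    dsimp only [f]
    split_ifs
    · exact le_rfl
    · exact layerRank_le hemp
  have hfstep : ∀ v v', v ∈ G → runStep M w v v' → f v' ≤ f v := by
    intro v v' hv hs
    have hv' : v'.2 ≠ 0 := by rw [hs.1]; omega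
    by_cases h0 : v.2 = 0
    · simpa [f, h0] using hfk v'
    · simpa [f, h0, hv'] using rank_step hemp hv hs
  have hfodd : ∀ v ∈ G, Odd (f v) → v ∉ runAcc M := by
    intro v hv ho
    dsimp only [f] at ho
    split_ifs at ho
    · exact absurd ho (by simp [hk])
    · exact notMem_acc_of_odd_rank hemp hv ho
  let E : (Q × ℕ) × ℕ → (Q × ℕ) × ℕ → Prop := fun p q =>
    runStep M w (p.1.1, p.2) (q.1.1, q.2) ∧ q.1.2 = f (q.1.1, q.2)
  have hinv : ∀ x, Relation.ReflTransGen E ((M.init, k), 0) x →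
      x.1.2 = f (x.1.1, x.2) ∧ (x.1.1, x.2) ∈ G := by
    intro x hx
    induction hx with
    | refl => exact ⟨by simp [f], hinit⟩
    | tail _ h ih => exact ⟨h.2, nonBuchi_step ih.2 h.1⟩
  refine ⟨E, ⟨fun p q h => h.1.1, ?_⟩, ?_⟩
  · rintro ⟨l, r⟩ i hreach
    obtain ⟨hr, hv⟩ := hinv _ hreach
    simp only at hr hv
    rw [sat_KV]
    refine ⟨fun h => hfodd _ hv (hr ▸ h.2) h.1, fun l' hl' => ?_⟩
    have hs : runStep M w (l, i) (l', i + 1) := ⟨rfl, hl'⟩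
    exact ⟨f (l', i + 1), hr ▸ hfstep _ _ hv hs, hs, rfl⟩
  · intro π h0 hstep n
    have hreach : ∀ i, Relation.ReflTransGen E ((M.init, k), 0) (π i) := by
      intro i
      induction i with
      | zero => rw [h0]; exact .refl
      | succ i ih => exact ih.tail (hstep i)
    let ρ : ℕ → Q × ℕ := fun i => ((π i).1.1, (π i).2)
    have hρ : IsPath (runStep M w) (M.init, 0) ρ := ⟨by simp [ρ, h0, KV], fun i => (hstep i).1⟩
    have hρG : ∀ i, ρ i ∈ G := fun i => (hinv _ (hreach i)).2
    have hrank : ∀ i, i ≠ 0 → (π i).1.2 = layerRank (runStep M w) (runAcc M) (ρ i) := by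
      intro i hi
      have hlev : (π i).2 = i := by simpa using runStep_level hρ i
      rw [(hinv _ (hreach i)).1]
      simp [f, ρ, hlev, hi]
    obtain ⟨N, hN⟩ := antitone_stabilizes (fun i => layerRank (runStep M w) (runAcc M) (ρ i))
      fun i => rank_step hemp (hρG i) (hρ.2 i)
    refine ⟨n + N + 1, by omega, ?_, ?_⟩
    · rw [hrank _ (by omega)]
      refine odd_of_constant_rank hemp (π := fun i => ρ (n + N + 1 + i))
        ⟨rfl, fun i => hρ.2 _⟩ (fun i => hρG _) fun i => ?_
      exact (hN _ (by omega)).trans (hN _ (by omega)).symm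
    · rw [hrank _ (by omega)]
      exact layerRank_le hemp

end RunGraph

/-- For every NBW `A` and even `k' ≤ k`, `L(KV(A,k')) ⊆ L(KV(A,k))`; moreover for
`k = 2(|L| - |α|)`, `L(KV(A,k)) = Σ^ω \ L(A)`. -/
theorem kv_correct {Q A : Type*} [Fintype Q] [Fintype A] (M : NBW Q A) :
    (∀ k' k : ℕ, Even k' → Even k → k' ≤ k → (KV M k').Lang ⊆ (KV M k).Lang) ∧
    (KV M (2 * (Fintype.card Q - M.acc.ncard))).Lang = M.Langᶜ := by
  refine ⟨fun k' k _ hk hle => KV_mono M hk hle, ?_⟩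
  have hcard : Fintype.card Q - M.acc.ncard = M.accᶜ.ncard := by
    rw [Set.ncard_compl, Nat.card_eq_fintype_card]
  rw [hcard]
  exact (KV_sound M _).antisymm (KV_complete M)
end

section
/- For every alternating Büchi automaton A, L(MH(A)) = L(A). -/
-- The Miyano-Hayashi construction: an NBW over `2^Q × 2^Q` accepting `L(M)`.
open Classical in
noncomputable def MH {Q A : Type*} (M : ABW Q A) : NBW (Set Q × Set Q) A where
  init := ({M.init}, ∅)
  delta := fun p σ =>
    if p.2 = ∅ then
      {q | ∃ s' : Set Q, q = (s', s' \ M.acc) ∧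
            ∀ l ∈ p.1, PosBool.Sat s' (M.delta l σ)}
    else
      {q | ∃ s' o' : Set Q, q = (s', o' \ M.acc) ∧ o' ⊆ s' ∧
            (∀ l ∈ p.1, PosBool.Sat s' (M.delta l σ)) ∧
            (∀ l ∈ p.2, PosBool.Sat o' (M.delta l σ))}
  acc := {p | p.2 = ∅}

theorem PosBool.Sat.mono {Q : Type*} {X Y : Set Q} (h : X ⊆ Y) {φ : PosBool Q}
    (hX : φ.Sat X) : φ.Sat Y := by
  induction φ with
  | tru => trivial
  | fls => exact hX
  | var q => exact h hX
  | and φ ψ ih₁ ih₂ => exact ⟨ih₁ hX.1, ih₂ hX.2⟩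
  | or φ ψ ih₁ ih₂ => exact hX.imp ih₁ ih₂

theorem MH_lang_subset {Q A : Type*} (M : ABW Q A) : (MH M).Lang ⊆ M.Lang := by
  rintro w ⟨ρ, ⟨h0, hstep⟩, hacc⟩
  let E : Q × ℕ → Q × ℕ → Prop := fun p q =>
    q.2 = p.2 + 1 ∧ q.1 ∈ (ρ q.2).1 ∧ (p.1 ∈ (ρ p.2).2 → q.1 ∈ M.acc ∪ (ρ q.2).2)
  have hreach : ∀ p, Relation.ReflTransGen E (M.init, 0) p → p.1 ∈ (ρ p.2).1 := by
    intro p hp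
    induction hp with
    | refl => simp [h0, MH]
    | tail _ h _ => exact h.2.1
  refine ⟨E, ⟨fun p q h => h.1, fun l i hl => ?_⟩, ?_⟩
  · have hls := hreach _ hl
    have hs := hstep i
    simp only [MH] at hs
    split_ifs at hs with ho
    · obtain ⟨s', hq, hsat⟩ := hs
      refine PosBool.Sat.mono (fun x hx => ?_) (hsat l hls)
      refine ⟨rfl, by simpa [hq] using hx, fun hlo => ?_⟩
      simp [ho] at hlo
    · obtain ⟨s', o', hq, hsub, hsat, hsat'⟩ := hs
      by_cases hlo : l ∈ (ρ i).2
      · refine PosBool.Sat.mono (fun x hx => ?_) (hsat' l hlo)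
        refine ⟨rfl, by simpa [hq] using hsub hx, fun _ => ?_⟩
        by_cases hxa : x ∈ M.acc
        · exact Or.inl hxa
        · exact Or.inr (by simpa [hq] using ⟨hx, hxa⟩)
      · refine PosBool.Sat.mono (fun x hx => ?_) (hsat l hls)
        exact ⟨rfl, by simpa [hq] using hx, fun h => absurd h hlo⟩
  · intro π hπ0 hπ n
    by_contra! hn
    have hlev : ∀ i, (π i).2 = i := by
      intro i
      induction i with
      | zero => simp [hπ0]
      | succ i ih => rw [(hπ i).1, ih]
    obtain ⟨i, hi, hio⟩ := hacc n
    have hio' : (ρ i).2 = ∅ := hio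
    have hin : ∀ k, (π (i + 1 + k)).1 ∈ (ρ (i + 1 + k)).2 := by
      intro k
      induction k with
      | zero =>
        have hs := hstep i
        simp only [MH, hio', if_true] at hs
        obtain ⟨s', hq, -⟩ := hs
        have h1 := (hπ i).2.1
        rw [hlev, hq] at h1
        rw [Nat.add_zero, hq]
        exact ⟨h1, hn _ (by omega)⟩
      | succ k ih =>
        have h1 := (hπ (i + 1 + k)).2.2
        rw [hlev, hlev] at h1
        exact (h1 ih).resolve_left (hn _ (by omega))
    obtain ⟨j, hj, hjo⟩ := hacc (i + 1)
    have hjo' : (ρ j).2 = ∅ := hjo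
    have h1 := hin (j - (i + 1))
    rw [show i + 1 + (j - (i + 1)) = j by omega, hjo'] at h1
    exact h1

theorem exists_forall_of_antitone {Q : Type*} [Finite Q] (C : Q → ℕ → Prop)
    (hC : ∀ l m m', m ≤ m' → C l m' → C l m) (H : ∀ m, ∃ l, C l m) : ∃ l, ∀ m, C l m := by
  by_contra! hcon
  choose b hb using hcon
  obtain ⟨m, hm⟩ := (Set.finite_range b).bddAbove
  obtain ⟨l, hl⟩ := H m
  exact hb l (hC l _ _ (hm ⟨l, rfl⟩) hl)

/-- König's lemma for levelled graphs with finite levels: if paths starting at level `n` reach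
arbitrarily high levels, then some infinite path starts at level `n`. -/
theorem exists_path_of_unbounded {Q : Type*} [Finite Q] (F : Q × ℕ → Q × ℕ → Prop)
    (hF : ∀ p q, F p q → q.2 = p.2 + 1) (S : Set Q) (n : ℕ)
    (H : ∀ m, ∃ l ∈ S, ∃ q : Q × ℕ, m ≤ q.2 ∧ Relation.ReflTransGen F (l, n) q) :
    ∃ π : ℕ → Q × ℕ, (∃ l ∈ S, π 0 = (l, n)) ∧ ∀ i, F (π i) (π (i + 1)) := by
  let Good : Q × ℕ → Prop := fun p => ∀ m, ∃ q : Q × ℕ, m ≤ q.2 ∧ Relation.ReflTransGen F p q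
  obtain ⟨l₀, hl₀⟩ := exists_forall_of_antitone
    (fun l m => l ∈ S ∧ ∃ q : Q × ℕ, m ≤ q.2 ∧ Relation.ReflTransGen F (l, n) q)
    (fun l m m' hm ⟨hS, q, hq, hr⟩ => ⟨hS, q, hm.trans hq, hr⟩) H
  have hnext : ∀ p : {p // Good p}, ∃ q : {q // Good q}, F p q := by
    rintro ⟨p, hp⟩
    obtain ⟨l, hl⟩ := exists_forall_of_antitone
      (fun l m => F p (l, p.2 + 1) ∧
        ∃ q : Q × ℕ, m ≤ q.2 ∧ Relation.ReflTransGen F (l, p.2 + 1) q)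
      (fun l m m' hm ⟨hS, q, hq, hr⟩ => ⟨hS, q, hm.trans hq, hr⟩) (by
        intro m
        -- Asking for a level above that of `p` rules out the trivial path.
        obtain ⟨q, hq, hr⟩ := hp (max m (p.2 + 1))
        rcases hr.cases_head with rfl | ⟨⟨l, j⟩, hc, hr'⟩
        · omega
        · obtain rfl : j = p.2 + 1 := hF _ _ hc
          exact ⟨l, hc, q, by omega, hr'⟩)
    exact ⟨⟨(l, p.2 + 1), fun m => (hl m).2⟩, (hl 0).1⟩
  choose next hnext using hnext
  let π : ℕ → {p // Good p} := fun i => next^[i] ⟨(l₀, n), fun m => (hl₀ m).2⟩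
  refine ⟨fun i => (π i).1, ⟨l₀, (hl₀ 0).1, rfl⟩, fun i => ?_⟩
  simp only [π, Function.iterate_succ_apply']
  exact hnext _

/-- The Büchi condition of an accepting run passes from the root to every reachable node. -/
theorem accepting_from_reachable {Q A : Type*} {M : ABW Q A} {w : ℕ → A}
    {E : Q × ℕ → Q × ℕ → Prop} (hE : M.Accepting w E) {p : Q × ℕ}
    (hp : Relation.ReflTransGen E (M.init, 0) p) :
    ∀ π : ℕ → Q × ℕ, π 0 = p → (∀ i, E (π i) (π (i + 1))) →
      ∀ n, ∃ i ≥ n, (π i).1 ∈ M.acc := by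
  induction hp with
  | refl => exact hE
  | @tail b c _ hbc ih =>
    intro π h0 hπ n
    -- Prepend the predecessor `b` to the path.
    obtain ⟨i, hi, hia⟩ := ih (fun i => Nat.casesOn i b π) rfl
      (by
        rintro (_ | i)
        · simpa [h0] using hbc
        · exact hπ i) (n + 1)
    obtain _ | i := i
    · omega
    · exact ⟨i, by omega, hia⟩

/-- The states of level `i` of a run DAG. -/
def level {Q A : Type*} (M : ABW Q A) (E : Q × ℕ → Q × ℕ → Prop) (i : ℕ) : Set Q :=
  {l | Relation.ReflTransGen E (M.init, 0) (l, i)}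

open Classical in
/-- The states of level `i` of a run DAG that are reached by a path avoiding `M.acc` since the last
reset; a reset takes place one level after the set has become empty. -/
noncomputable def owing {Q A : Type*} (M : ABW Q A) (E : Q × ℕ → Q × ℕ → Prop) : ℕ → Set Q
  | 0 => ∅
  | i + 1 =>
    if owing M E i = ∅ then level M E (i + 1) \ M.acc
    else {l' | ∃ l ∈ owing M E i, E (l, i) (l', i + 1)} \ M.acc

theorem owing_subset {Q A : Type*} (M : ABW Q A) (E : Q × ℕ → Q × ℕ → Prop) (i : ℕ) :
    owing M E i ⊆ level M E i \ M.acc := by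
  induction i with
  | zero => simp [owing]
  | succ i ih =>
    rw [owing]
    split_ifs with h
    · exact subset_rfl
    · rintro x ⟨⟨l, hl, hlx⟩, hx⟩
      exact ⟨(ih hl).1.tail hlx, hx⟩

theorem owing_infinitely_often_empty {Q A : Type*} [Finite Q] {M : ABW Q A} {w : ℕ → A}
    {E : Q × ℕ → Q × ℕ → Prop} (hlev : ∀ p q, E p q → q.2 = p.2 + 1)
    (hE : M.Accepting w E) (n : ℕ) : ∃ i ≥ n, owing M E i = ∅ := by
  by_contra! hn
  let F : Q × ℕ → Q × ℕ → Prop := fun p q => E p q ∧ q.1 ∈ owing M E q.2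
  have hback : ∀ k, ∀ x ∈ owing M E (n + k),
      ∃ l ∈ owing M E n, Relation.ReflTransGen F (l, n) (x, n + k) := by
    intro k
    induction k with
    | zero => exact fun x hx => ⟨x, hx, .refl⟩
    | succ k ih =>
      intro x hx
      have hx' := hx
      rw [← Nat.add_assoc, owing, if_neg (hn _ (by omega)).ne_empty] at hx'
      obtain ⟨⟨y, hy, hyx⟩, -⟩ := hx'
      obtain ⟨l, hl, hr⟩ := ih y hy
      exact ⟨l, hl, hr.tail ⟨hyx, hx⟩⟩
  obtain ⟨π, ⟨l, hl, h0⟩, hπ⟩ := exists_path_of_unbounded F (fun p q h => hlev p q h.1)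
    (owing M E n) n (by
      intro m
      obtain ⟨x, hx⟩ := hn (n + m) (by omega)
      obtain ⟨l, hl, hr⟩ := hback m x hx
      exact ⟨l, hl, (x, n + m), by simp, hr⟩)
  obtain ⟨i, hi, hia⟩ := accepting_from_reachable hE (owing_subset M E n hl).1 π h0
    (fun i => (hπ i).1) 1
  obtain _ | i := i
  · omega
  · exact (owing_subset M E _ (hπ i).2).2 hia

theorem lang_subset_MH {Q A : Type*} [Finite Q] (M : ABW Q A) : M.Lang ⊆ (MH M).Lang := by
  rintro w ⟨E, ⟨hlev, hsat⟩, hE⟩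
  have hS : ∀ i, ∀ l ∈ level M E i, PosBool.Sat (level M E (i + 1)) (M.delta l (w i)) :=
    fun i l hl => (hsat l i hl).mono fun x hx => Relation.ReflTransGen.tail hl hx
  refine ⟨fun i => (level M E i, owing M E i), ⟨?_, fun i => ?_⟩,
    fun n => owing_infinitely_often_empty hlev hE n⟩
  · have h0 : level M E 0 = {M.init} := by
      ext x
      refine ⟨fun hx => ?_, ?_⟩
      · rcases Relation.ReflTransGen.cases_tail hx with h | ⟨c, -, h⟩
        · simpa using congrArg Prod.fst h
        · exact absurd (hlev _ _ h) (by simp)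
      · rintro rfl
        exact Relation.ReflTransGen.refl
    simp [MH, owing, h0]
  · simp only [MH, owing]
    split_ifs with h
    · exact ⟨_, rfl, hS i⟩
    · refine ⟨_, _, rfl, ?_, hS i, fun l hl => ?_⟩
      · rintro x ⟨l, hl, hlx⟩
        exact (owing_subset M E i hl).1.tail hlx
      · refine PosBool.Sat.mono (fun x hx => ?_) (hsat l i (owing_subset M E i hl).1)
        exact ⟨l, hl, hx⟩

/-- For every alternating Büchi automaton `A`, `L(MH(A)) = L(A)`. -/
theorem mh_correct {Q A : Type*} [Fintype Q] [Fintype A] (M : ABW Q A) :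
    (MH M).Lang = M.Lang := by
  exact (MH_lang_subset M).antisymm (lang_subset_MH M)
end

section
/- For every nondeterministic Büchi automaton A = ⟨L, ι, Σ, δ, α⟩ and all even numbers k', k with 0 ≤ k' ≤ k, L(KVMH(A, k')) ⊆ L(KVMH(A, k)); moreover, for k = 2(|L| − |α|), L(KVMH(A, k)) = Σ^ω \ L(A). -/
/-- `Q_k`: sets of pairs `(l, n)` with `n ≤ k` and `n` even whenever `l ∈ α`. -/
def Qk {Q A : Type*} (M : NBW Q A) (k : ℕ) : Set (Set (Q × ℕ)) :=
  {s | ∀ p ∈ s, p.2 ≤ k ∧ (p.1 ∈ M.acc → Even p.2)}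

/-- `odd = L × [k]^odd`. -/
def kvOdd (Q : Type*) (k : ℕ) : Set (Q × ℕ) := {p | Odd p.2 ∧ p.2 ≤ k}

/-- `∀ (l,n) ∈ s, ∀ l' ∈ δ(l,σ), ∃ n' ≤ n, (l',n') ∈ s'`. -/
def kvStep {Q A : Type*} (M : NBW Q A) (σ : A) (s s' : Set (Q × ℕ)) : Prop :=
  ∀ p ∈ s, ∀ l' ∈ M.delta p.1 σ, ∃ n' ≤ p.2, (l', n') ∈ s'

-- The composition of the Kupferman-Vardi and Miyano-Hayashi constructions:
-- an NBW over `Q_k × Q_k` (embedded in pairs of sets of pairs) accepting `L^c(M)`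
-- when `k = 2(|L| - |α|)`.
open Classical in
noncomputable def KVMH {Q A : Type*} (M : NBW Q A) (k : ℕ) :
    NBW (Set (Q × ℕ) × Set (Q × ℕ)) A where
  init := ({(M.init, k)}, ∅)
  delta := fun p σ =>
    if p.2 = ∅ then
      {q | ∃ s' ∈ Qk M k, q = (s', s' \ kvOdd Q k) ∧ kvStep M σ p.1 s'}
    else
      {q | ∃ s' ∈ Qk M k, ∃ o', q = (s', o' \ kvOdd Q k) ∧ o' ⊆ s' ∧
            kvStep M σ p.1 s' ∧ kvStep M σ p.2 o'}
  acc := {p | p.2 = ∅}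

/-- The pre-order `≼_univ` on `Q_k × Q_k`. -/
def univLe {Q : Type*} (p q : Set (Q × ℕ) × Set (Q × ℕ)) : Prop :=
  (∀ x ∈ p.1, ∃ n' ≤ x.2, (x.1, n') ∈ q.1) ∧
  (∀ x ∈ p.2, ∃ n' ≤ x.2, (x.1, n') ∈ q.2) ∧
  (p.2 = ∅ ↔ q.2 = ∅)

namespace KVMHProof

open Filter

variable {Q A : Type*}

/-! ### Generic facts -/

theorem eventually_const (f : ℕ → ℕ) (hf : ∀ i, f (i + 1) ≤ f i) :
    ∃ N, ∀ n ≥ N, f n = f N := by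
  have hanti : Antitone f := antitone_nat_of_succ_le hf
  obtain ⟨N, hN⟩ := Nat.sInf_mem (Set.range_nonempty f)
  refine ⟨N, fun n hn => le_antisymm (hanti hn) ?_⟩
  rw [hN]
  exact Nat.sInf_le ⟨n, rfl⟩

/-- Kőnig's lemma for layered graphs with finite layers: if every layer `O j` is nonempty and
every vertex of layer `j + 1` has a predecessor in layer `j`, there is an infinite path. The path
is the limit, along a nonprincipal ultrafilter, of finite paths of growing length. -/
theorem konig [Finite Q] (O : ℕ → Set Q) (e : ℕ → Q → Q → Prop)
    (hne : ∀ j, (O j).Nonempty) (hpred : ∀ j, ∀ l' ∈ O (j + 1), ∃ l ∈ O j, e j l l') :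
    ∃ ρ : ℕ → Q, ∀ j, ρ j ∈ O j ∧ e j (ρ j) (ρ (j + 1)) := by
  have hfin : ∀ n, ∀ l ∈ O n, ∃ ρ : ℕ → Q,
      ρ n = l ∧ ∀ j < n, ρ j ∈ O j ∧ e j (ρ j) (ρ (j + 1)) := by
    intro n
    induction n with
    | zero => exact fun l _ => ⟨fun _ => l, rfl, by simp⟩
    | succ n ih =>
      intro l' hl'
      obtain ⟨l, hl, he⟩ := hpred n l' hl'
      obtain ⟨ρ, hρ, hstep⟩ := ih l hl
      refine ⟨fun i => if i ≤ n then ρ i else l', by simp, fun j hj => ?_⟩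
      rcases Nat.lt_succ_iff_lt_or_eq.1 hj with hj | rfl
      · have h1 : j ≤ n := hj.le
        have h2 : j + 1 ≤ n := hj
        simpa [h1, h2] using hstep j hj
      · simpa [hρ] using ⟨hl, he⟩
  have hex : ∀ n, ∃ ρ : ℕ → Q, ∀ j < n, ρ j ∈ O j ∧ e j (ρ j) (ρ (j + 1)) := by
    intro n
    obtain ⟨l, hl⟩ := hne n
    obtain ⟨ρ, -, h⟩ := hfin n l hl
    exact ⟨ρ, h⟩
  choose P hP using hex
  have hlim : ∀ j, ∃ l, ∀ᶠ n in (hyperfilter ℕ : Filter ℕ), P n j = l := fun j =>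
    Ultrafilter.eventually_exists_iff.1 (Eventually.of_forall fun n => ⟨P n j, rfl⟩)
  choose ρ hρ using hlim
  refine ⟨ρ, fun j => ?_⟩
  have hlarge : ∀ᶠ n in (hyperfilter ℕ : Filter ℕ), j < n :=
    Nat.hyperfilter_le_atTop (eventually_gt_atTop j)
  obtain ⟨n, ⟨h1, h2⟩, h3⟩ := (((hρ j).and (hρ (j + 1))).and hlarge).exists
  rw [← h1, ← h2]
  exact hP n j h3

theorem mem_delta {M : NBW Q A} {k : ℕ} {p q : Set (Q × ℕ) × Set (Q × ℕ)} {σ : A} :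
    q ∈ (KVMH M k).delta p σ ↔ q.1 ∈ Qk M k ∧ kvStep M σ p.1 q.1 ∧
      (p.2 = ∅ → q.2 = q.1 \ kvOdd Q k) ∧
      (p.2 ≠ ∅ → ∃ o', q.2 = o' \ kvOdd Q k ∧ o' ⊆ q.1 ∧ kvStep M σ p.2 o') := by
  obtain ⟨s', t⟩ := q
  by_cases h : p.2 = ∅
  · simp only [KVMH, h, if_true, Set.mem_ofPred_eq, Prod.mk.injEq]
    constructor
    · rintro ⟨s, hs, ⟨rfl, rfl⟩, hstep⟩
      exact ⟨hs, hstep, fun _ => rfl, fun h => absurd rfl h⟩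
    · rintro ⟨hs, hstep, h1, -⟩
      exact ⟨s', hs, ⟨rfl, h1 trivial⟩, hstep⟩
  · simp only [KVMH, h, if_false, Set.mem_ofPred_eq, Prod.mk.injEq]
    constructor
    · rintro ⟨s, hs, o', ⟨rfl, rfl⟩, hsub, hstep, hstep'⟩
      exact ⟨hs, hstep, fun h => h.elim, fun _ => ⟨o', rfl, hsub, hstep'⟩⟩
    · rintro ⟨hs, hstep, -, h2⟩
      obtain ⟨o', ho, hsub, hstep'⟩ := h2 h
      exact ⟨s', hs, o', ⟨rfl, ho⟩, hsub, hstep, hstep'⟩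

/-! ### Monotonicity in the rank bound -/

theorem diff_kvOdd {k k' : ℕ} (hk : k' ≤ k) {s : Set (Q × ℕ)} (hs : ∀ p ∈ s, p.2 ≤ k') :
    s \ kvOdd Q k' = s \ kvOdd Q k := by
  ext p
  simp only [kvOdd, Set.mem_sdiff, Set.mem_ofPred_eq]
  constructor
  · rintro ⟨hp, hn⟩
    exact ⟨hp, fun h => hn ⟨h.1, hs p hp⟩⟩
  · rintro ⟨hp, hn⟩
    exact ⟨hp, fun h => hn ⟨h.1, h.2.trans hk⟩⟩

/-- An accepting run for the bound `k'` becomes one for the bound `k` by replacing only its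
initial state. -/
theorem lang_mono (M : NBW Q A) {k' k : ℕ} (hk : k' ≤ k) :
    (KVMH M k').Lang ⊆ (KVMH M k).Lang := by
  rintro w ⟨ρ, ⟨h0, hstep⟩, hacc⟩
  refine ⟨fun i => if i = 0 then (KVMH M k).init else ρ i, ⟨by simp, fun i => ?_⟩, fun n => ?_⟩
  · obtain ⟨h1, h2, h3, h4⟩ := mem_delta.1 (hstep i)
    have hQ : (ρ (i + 1)).1 ∈ Qk M k := fun p hp => ⟨(h1 p hp).1.trans hk, (h1 p hp).2⟩
    have hbd : ∀ p ∈ (ρ (i + 1)).1, p.2 ≤ k' := fun p hp => (h1 p hp).1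
    beta_reduce
    rw [if_neg (Nat.succ_ne_zero i), mem_delta]
    refine ⟨hQ, ?_⟩
    rcases Nat.eq_zero_or_pos i with rfl | hi
    · rw [h0] at h2 h3
      simp only [KVMH, if_true]
      refine ⟨?_, fun _ => by rw [h3 rfl, diff_kvOdd hk hbd], fun h => absurd rfl h⟩
      rintro p rfl l' hl'
      obtain ⟨n', hn', hmem⟩ := h2 (M.init, k') rfl l' hl'
      exact ⟨n', le_trans hn' hk, hmem⟩
    · rw [if_neg hi.ne']
      refine ⟨h2, fun h => by rw [h3 h, diff_kvOdd hk hbd], fun h => ?_⟩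
      obtain ⟨o', ho, hsub, hs⟩ := h4 h
      exact ⟨o', by rw [ho, diff_kvOdd hk fun p hp => hbd p (hsub hp)], hsub, hs⟩
  · obtain ⟨i, hi, hmem⟩ := hacc (n + 1)
    refine ⟨i, by omega, ?_⟩
    beta_reduce
    rw [if_neg (by omega)]
    exact hmem

/-! ### Soundness: accepted words are rejected by the original automaton -/

/-- Along an accepting run `ρ` of `M`, the least rank of `ρ i` in the first component is
nonincreasing, hence eventually a constant `m`, which is even since `ρ` meets `M.acc`. After the
next breakpoint the pair `(ρ i, m)` never leaves the second component, which is thus nonempty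
forever. -/
theorem lang_sound (M : NBW Q A) (k : ℕ) : (KVMH M k).Lang ⊆ M.Langᶜ := by
  rintro w ⟨S, ⟨hS0, hS⟩, hSacc⟩ ⟨ρ, ⟨hρ0, hρ⟩, hρacc⟩
  have hne : ∀ i, ∃ n, (ρ i, n) ∈ (S i).1 := by
    intro i
    induction i with
    | zero => exact ⟨k, by rw [hS0, hρ0]; rfl⟩
    | succ i ih =>
      obtain ⟨n, hn⟩ := ih
      obtain ⟨n', -, h⟩ := (mem_delta.1 (hS i)).2.1 _ hn _ (hρ i)
      exact ⟨n', h⟩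
  let m : ℕ → ℕ := fun i => sInf {n | (ρ i, n) ∈ (S i).1}
  have hm : ∀ i, (ρ i, m i) ∈ (S i).1 := fun i => Nat.sInf_mem (hne i)
  have hmle : ∀ i n, (ρ i, n) ∈ (S i).1 → m i ≤ n := fun i n h => Nat.sInf_le h
  have hdec : ∀ i, m (i + 1) ≤ m i := by
    intro i
    obtain ⟨n', hn', h⟩ := (mem_delta.1 (hS i)).2.1 _ (hm i) _ (hρ i)
    exact (hmle _ _ h).trans hn'
  obtain ⟨N, hN⟩ := eventually_const m hdec
  have heven : Even (m N) := by
    obtain ⟨i, hi, hacc⟩ := hρacc (N + 1)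
    obtain ⟨j, rfl⟩ : ∃ j, i = j + 1 := ⟨i - 1, by omega⟩
    have := ((mem_delta.1 (hS j)).1 _ (hm (j + 1))).2 hacc
    rwa [hN _ (by omega)] at this
  have hnotodd : ∀ l : Q, (l, m N) ∉ kvOdd Q k := fun l h => Nat.not_odd_iff_even.2 heven h.1
  obtain ⟨t, ht, hempty⟩ := hSacc N
  have hstay : ∀ j, (ρ (t + 1 + j), m N) ∈ (S (t + 1 + j)).2 := by
    intro j
    induction j with
    | zero =>
      have h1 := hm (t + 1)
      rw [hN _ (by omega)] at h1
      show (ρ (t + 1), m N) ∈ (S (t + 1)).2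
      rw [(mem_delta.1 (hS t)).2.2.1 hempty]
      exact ⟨h1, hnotodd _⟩
    | succ j ih =>
      obtain ⟨o', ho, hsub, hs⟩ := (mem_delta.1 (hS (t + 1 + j))).2.2.2
        (Set.nonempty_iff_ne_empty.1 ⟨_, ih⟩)
      obtain ⟨n', hn', h⟩ := hs _ ih _ (hρ _)
      have h1 : m N ≤ n' := by
        rw [← hN (t + 1 + j + 1) (by omega)]
        exact hmle _ _ (hsub h)
      obtain rfl : n' = m N := le_antisymm hn' h1
      show (ρ (t + 1 + j + 1), m N) ∈ (S (t + 1 + j + 1)).2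
      rw [ho]
      exact ⟨h, hnotodd _⟩
  obtain ⟨i, hi, hempty'⟩ := hSacc (t + 1)
  obtain ⟨j, rfl⟩ := Nat.exists_eq_add_of_le hi
  have := hstay j
  rw [show (S (t + 1 + j)).2 = ∅ from hempty'] at this
  exact this

/-! ### The run DAG and its ranking -/

/-- The edges of the run DAG of `M` on `w`; a vertex `(i, l)` is a state `l` at level `i`. -/
def Edge (M : NBW Q A) (w : ℕ → A) (v v' : ℕ × Q) : Prop :=
  v'.1 = v.1 + 1 ∧ v'.2 ∈ M.delta v.2 (w v.1)

/-- The vertices of the run DAG: those `(i, l)` for which some finite run of length `i`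
ends in `l`. -/
def Reach (M : NBW Q A) (w : ℕ → A) : Set (ℕ × Q) :=
  {v | ∃ ρ : ℕ → Q, ρ 0 = M.init ∧ (∀ j < v.1, ρ (j + 1) ∈ M.delta (ρ j) (w j)) ∧ ρ v.1 = v.2}

/-- The vertices from which an infinite path inside `G` starts. -/
def InfPath (M : NBW Q A) (w : ℕ → A) (G : Set (ℕ × Q)) : Set (ℕ × Q) :=
  {v | ∃ p : ℕ → ℕ × Q, p 0 = v ∧ ∀ j, p j ∈ G ∧ Edge M w (p j) (p (j + 1))}

/-- The vertices from which a path inside `G` with exactly `n` edges leads to an accepting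
state. -/
def AccDist (M : NBW Q A) (w : ℕ → A) (G : Set (ℕ × Q)) : ℕ → Set (ℕ × Q)
  | 0 => {v | v ∈ G ∧ v.2 ∈ M.acc}
  | n + 1 => {v | v ∈ G ∧ ∃ v', Edge M w v v' ∧ v' ∈ AccDist M w G n}

/-- The Kupferman–Vardi filtration of the run DAG: even stages drop the vertices with no infinite
path, odd stages drop those from which no accepting state can be reached. -/
def Layer (M : NBW Q A) (w : ℕ → A) : ℕ → Set (ℕ × Q)
  | 0 => Reach M w
  | r + 1 => {v | v ∈ Layer M w r ∧
      (Even r → v ∈ InfPath M w (Layer M w r)) ∧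
      (¬ Even r → ∃ n, v ∈ AccDist M w (Layer M w r) n)}

/-- The rank of a vertex: the stage of the filtration at which it is dropped. It is `0` for a
vertex that is never dropped. -/
noncomputable def rank (M : NBW Q A) (w : ℕ → A) (v : ℕ × Q) : ℕ :=
  sInf {r | v ∉ Layer M w (r + 1)}

variable {M : NBW Q A} {w : ℕ → A}

theorem layer_anti {r r' : ℕ} (h : r ≤ r') : Layer M w r' ⊆ Layer M w r :=
  antitone_nat_of_succ_le (f := Layer M w) (fun _ _ hv => hv.1) h

theorem layer_reach {r : ℕ} : Layer M w r ⊆ Reach M w := layer_anti (Nat.zero_le r)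

theorem reach_edge {v v' : ℕ × Q} (hv : v ∈ Reach M w) (he : Edge M w v v') :
    v' ∈ Reach M w := by
  obtain ⟨i, l⟩ := v
  obtain ⟨i', l'⟩ := v'
  obtain ⟨rfl, hl⟩ : i' = i + 1 ∧ l' ∈ M.delta l (w i) := he
  obtain ⟨ρ, h0, hs, hi⟩ := hv
  obtain rfl : ρ i = l := hi
  refine ⟨fun j => if j ≤ i then ρ j else l', by simpa using h0, fun j hj => ?_, by simp⟩
  simp only at hj hl hs
  rcases Nat.lt_succ_iff_lt_or_eq.1 hj with hj | rfl
  · have h1 : j ≤ i := hj.le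
    have h2 : j + 1 ≤ i := hj
    simpa [h1, h2] using hs j hj
  · simpa using hl

theorem infPath_cons {G : Set (ℕ × Q)} {v v' : ℕ × Q} (hv : v ∈ G) (he : Edge M w v v')
    (hv' : v' ∈ InfPath M w G) : v ∈ InfPath M w G := by
  obtain ⟨p, rfl, hp⟩ := hv'
  refine ⟨fun j => Nat.casesOn j v p, rfl, fun j => ?_⟩
  cases j with
  | zero => exact ⟨hv, he⟩
  | succ j => exact hp j

theorem layer_pred {r : ℕ} {v v' : ℕ × Q} (hv : v ∈ Reach M w) (he : Edge M w v v')
    (hv' : v' ∈ Layer M w r) : v ∈ Layer M w r := by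
  induction r with
  | zero => exact hv
  | succ r ih =>
    obtain ⟨h1, h2, h3⟩ := hv'
    have hvr := ih h1
    refine ⟨hvr, fun hr => infPath_cons hvr he (h2 hr), fun hr => ?_⟩
    obtain ⟨n, hn⟩ := h3 hr
    exact ⟨n + 1, hvr, v', he, hn⟩

theorem path_level {p : ℕ → ℕ × Q} (hp : ∀ j, Edge M w (p j) (p (j + 1))) (j : ℕ) :
    (p j).1 = (p 0).1 + j := by
  induction j with
  | zero => rfl
  | succ j ih => rw [(hp j).1, ih]; omega

theorem lang_of_path {p : ℕ → ℕ × Q} (h0 : p 0 ∈ Reach M w)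
    (hp : ∀ j, Edge M w (p j) (p (j + 1))) (hacc : ∀ n, ∃ i ≥ n, (p i).2 ∈ M.acc) :
    w ∈ M.Lang := by
  obtain ⟨ρ, hρ0, hρ, hρe⟩ := h0
  set a := (p 0).1 with ha
  refine ⟨fun i => if i < a then ρ i else (p (i - a)).2, ⟨?_, fun i => ?_⟩, fun n => ?_⟩
  · by_cases h : 0 < a
    · simpa [h] using hρ0
    · have h' : a = 0 := by omega
      rw [h'] at hρe
      simp [h', ← hρe, hρ0]
  · rcases lt_trichotomy (i + 1) a with h | h | h
    · have h1 : i < a := by omega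
      simpa [h, h1] using hρ i h1
    · have h1 : i < a := by omega
      have h2 := hρ i h1
      rw [h, hρe] at h2
      simpa [h, h1] using h2
    · have h1 : ¬ i < a := by omega
      have h2 : ¬ i + 1 < a := by omega
      have h3 := (hp (i - a)).2
      rw [path_level hp, ← ha, show a + (i - a) = i by omega,
        show i - a + 1 = i + 1 - a by omega] at h3
      simpa [h1, h2] using h3
  · obtain ⟨i, hi, h⟩ := hacc n
    refine ⟨a + i, by omega, ?_⟩
    simpa using h

/-- If `w` is rejected, every nonempty stage of odd index has a vertex that cannot reach an
accepting state. Otherwise, following successors that decrease the distance to the accepting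
states, and arbitrary successors at accepting states, gives an accepting run. -/
theorem exists_free (hw : w ∉ M.Lang) {r : ℕ} (hr : Even r)
    (hne : (Layer M w (r + 1)).Nonempty) :
    ∃ v ∈ Layer M w (r + 1), ∀ n, v ∉ AccDist M w (Layer M w (r + 1)) n := by
  classical
  by_contra! hcon
  set G := Layer M w (r + 1) with hG
  let d : ∀ v, v ∈ G → ℕ := fun v hv => Nat.find (hcon v hv)
  have hnext : ∀ v : G, ∃ v' : G, Edge M w v v' ∧
      (v.1.2 ∉ M.acc → d v' v'.2 < d v v.2) := by
    rintro ⟨v, hv⟩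
    by_cases hacc : v.2 ∈ M.acc
    · obtain ⟨p, rfl, hp⟩ := hv.2.1 hr
      have h1 : p 1 ∈ G := by
        refine ⟨(hp 1).1, fun _ => ⟨fun j => p (j + 1), rfl, fun j => hp (j + 1)⟩,
          fun h => absurd hr h⟩
      exact ⟨⟨p 1, h1⟩, (hp 0).2, fun h => absurd hacc h⟩
    · have hd : v ∈ AccDist M w G (d v hv) := Nat.find_spec (hcon v hv)
      rcases hdv : d v hv with _ | n
      · rw [hdv] at hd
        exact absurd hd.2 hacc
      · rw [hdv] at hd
        obtain ⟨-, v', he, hv'⟩ := hd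
        have hv'G : v' ∈ G := by
          cases n with
          | zero => exact hv'.1
          | succ n => exact hv'.1
        refine ⟨⟨v', hv'G⟩, he, fun _ => ?_⟩
        have : d v' hv'G ≤ n := Nat.find_min' (hcon v' hv'G) hv'
        exact Nat.lt_succ_of_le this
  choose next hedge hdec using hnext
  obtain ⟨v₀, hv₀⟩ := hne
  let p : ℕ → G := fun j => next^[j] ⟨v₀, hv₀⟩
  have hps : ∀ j, p (j + 1) = next (p j) := fun j => Function.iterate_succ_apply' next j _
  refine hw (lang_of_path (p := fun j => (p j).1) (layer_reach (p 0).2)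
    (fun j => by rw [hps]; exact hedge _) ?_)
  by_contra! h
  obtain ⟨n, hn⟩ := h
  have hbound : ∀ j, d _ (p (n + j)).2 + j ≤ d _ (p n).2 := by
    intro j
    induction j with
    | zero => exact le_rfl
    | succ j ih =>
      have h1 := hdec (p (n + j)) (hn _ (by omega))
      have h2 : d _ (p (n + (j + 1))).2 = d _ (next (p (n + j))).2 := by
        have := hps (n + j)
        rw [add_assoc] at this
        rw [this]
      omega
  have := hbound (d _ (p n).2 + 1)
  omega

theorem path_mem_layer {r : ℕ} (hr : Even r) {p : ℕ → ℕ × Q}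
    (hp : ∀ j, p j ∈ Layer M w r ∧ Edge M w (p j) (p (j + 1))) (j : ℕ) :
    p j ∈ Layer M w (r + 1) :=
  ⟨(hp j).1, fun _ => ⟨fun i => p (j + i), rfl, fun i => hp (j + i)⟩, fun h => absurd hr h⟩

/-- Each two stages remove a nonaccepting state from almost every level: an infinite path from a
vertex that cannot reach accepting states is removed as a whole. -/
theorem width_le [Finite Q] (hw : w ∉ M.Lang) (i : ℕ) :
    ∃ N, ∀ n ≥ N, {l | l ∉ M.acc ∧ (n, l) ∈ Layer M w (2 * i)}.ncard ≤ (M.acc)ᶜ.ncard - i := by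
  induction i with
  | zero => exact ⟨0, fun n _ => Set.ncard_le_ncard (fun l hl => hl.1) (Set.toFinite _)⟩
  | succ i ih =>
    obtain ⟨N, hN⟩ := ih
    have hev : Even (2 * i) := even_two_mul i
    have hnev : ¬ Even (2 * i + 1) := by simp
    rcases Set.eq_empty_or_nonempty (Layer M w (2 * i + 1)) with hempty | hne
    · refine ⟨0, fun n _ => ?_⟩
      have : {l | l ∉ M.acc ∧ (n, l) ∈ Layer M w (2 * (i + 1))} = ∅ := by
        refine Set.eq_empty_of_forall_notMem fun l hl => ?_
        have h : (n, l) ∈ Layer M w (2 * i + 1) := layer_anti (by omega) hl.2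
        rw [hempty] at h
        exact h
      simp [this]
    · obtain ⟨v, hv, hfree⟩ := exists_free hw hev hne
      obtain ⟨p, rfl, hp⟩ := hv.2.1 hev
      have hpG := path_mem_layer hev hp
      have hpfree : ∀ j n, p j ∉ AccDist M w (Layer M w (2 * i + 1)) n := by
        intro j
        induction j with
        | zero => exact hfree
        | succ j ihj => exact fun n hn => ihj (n + 1) ⟨hpG j, _, (hp j).2, hn⟩
      refine ⟨max N (p 0).1, fun n hn => ?_⟩
      obtain ⟨j, hj⟩ := Nat.exists_eq_add_of_le ((le_max_right _ _).trans hn)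
      have hlev : p j = (n, (p j).2) := by
        rw [hj, ← path_level (fun j => (hp j).2) j]
      have hlt : {l | l ∉ M.acc ∧ (n, l) ∈ Layer M w (2 * (i + 1))}.ncard <
          {l | l ∉ M.acc ∧ (n, l) ∈ Layer M w (2 * i)}.ncard := by
        refine Set.ncard_lt_ncard (Set.ssubset_iff_exists.2
          ⟨fun l hl => ⟨hl.1, layer_anti (by omega) hl.2⟩, (p j).2,
            ⟨fun h => hpfree j 0 ⟨hpG j, h⟩, hlev ▸ (hp j).1⟩, fun h => ?_⟩) (Set.toFinite _)
        have h2 : p j ∈ Layer M w (2 * i + 1 + 1) := by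
          rw [hlev]; exact h.2
        obtain ⟨m, hm⟩ := h2.2.2 hnev
        exact hpfree j m hm
      have := hN n ((le_max_left _ _).trans hn)
      omega

theorem layer_empty [Finite Q] (hw : w ∉ M.Lang) :
    Layer M w (2 * (M.acc)ᶜ.ncard + 1) = ∅ := by
  refine Set.eq_empty_of_forall_notMem fun v hv => ?_
  obtain ⟨N, hN⟩ := width_le hw (M.acc)ᶜ.ncard
  obtain ⟨p, rfl, hp⟩ := hv.2.1 (even_two_mul _)
  refine hw (lang_of_path (layer_reach hv) (fun j => (hp j).2)
    fun n => ⟨max n N, le_max_left _ _, ?_⟩)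
  by_contra hacc
  have hlev := path_level (fun j => (hp j).2) (max n N)
  have h0 := hN (p (max n N)).1 (by rw [hlev]; exact le_add_left (le_max_right _ _))
  rw [Nat.sub_self, Nat.le_zero, Set.ncard_eq_zero (Set.toFinite _)] at h0
  have : (p (max n N)).2 ∈ (∅ : Set Q) := h0 ▸ ⟨hacc, (hp (max n N)).1⟩
  exact this

theorem rank_spec [Finite Q] (hw : w ∉ M.Lang) (v : ℕ × Q) : v ∉ Layer M w (rank M w v + 1) :=
  Nat.sInf_mem (s := {r | v ∉ Layer M w (r + 1)})
    ⟨2 * (M.acc)ᶜ.ncard, by simp [layer_empty hw]⟩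

theorem rank_le [Finite Q] (hw : w ∉ M.Lang) (v : ℕ × Q) : rank M w v ≤ 2 * (M.acc)ᶜ.ncard :=
  Nat.sInf_le (by simp [layer_empty hw])

theorem mem_layer_rank {v : ℕ × Q} (hv : v ∈ Reach M w) : v ∈ Layer M w (rank M w v) := by
  rcases h : rank M w v with _ | r
  · exact hv
  · by_contra hn
    have : rank M w v ≤ r := Nat.sInf_le hn
    omega

theorem rank_edge [Finite Q] (hw : w ∉ M.Lang) {v v' : ℕ × Q} (hv : v ∈ Reach M w)
    (he : Edge M w v v') : rank M w v' ≤ rank M w v :=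
  Nat.sInf_le fun h => rank_spec hw v (layer_pred hv he h)

theorem even_rank [Finite Q] (hw : w ∉ M.Lang) {v : ℕ × Q} (hv : v ∈ Reach M w)
    (hacc : v.2 ∈ M.acc) :
    Even (rank M w v) := by
  by_contra hodd
  exact rank_spec hw v ⟨mem_layer_rank hv, fun h => absurd h hodd,
    fun _ => ⟨0, mem_layer_rank hv, hacc⟩⟩

/-- No infinite path of the run DAG has only even ranks: the rank would stabilise at some even
`r`, although a vertex of rank `r` starts no infinite path inside stage `r`. -/
theorem no_even_path [Finite Q] (hw : w ∉ M.Lang) {p : ℕ → ℕ × Q}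
    (hp : ∀ j, p j ∈ Reach M w ∧ Edge M w (p j) (p (j + 1)))
    (heven : ∀ j, Even (rank M w (p j))) : False := by
  obtain ⟨N, hN⟩ := eventually_const (fun j => rank M w (p j))
    fun j => rank_edge hw (hp j).1 (hp j).2
  refine rank_spec hw (p N) (path_mem_layer (p := fun j => p (N + j)) (heven N) (fun j => ?_) 0)
  have h := mem_layer_rank (hp (N + j)).1
  rw [hN (N + j) (by omega)] at h
  exact ⟨h, (hp (N + j)).2⟩

/-! ### Completeness: rejected words are accepted by the construction -/

/-- First components of the accepting run: the reachable states with their ranks, except at level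
`0`, where the prescribed initial rank `k` is used. -/
noncomputable def sRun (M : NBW Q A) (w : ℕ → A) (k : ℕ) : ℕ → Set (Q × ℕ)
  | 0 => {(M.init, k)}
  | i + 1 => {x | (i + 1, x.1) ∈ Reach M w ∧ x.2 = rank M w (i + 1, x.1)}

open Classical in
/-- Second components of the accepting run: they are refilled from `sRun` when empty, and
otherwise consist of the even-ranked successors of the previous one. -/
noncomputable def oRun (M : NBW Q A) (w : ℕ → A) (k : ℕ) : ℕ → Set (Q × ℕ)
  | 0 => ∅
  | i + 1 => if oRun M w k i = ∅ then sRun M w k (i + 1) \ kvOdd Q k else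
      {x | (∃ y ∈ oRun M w k i, x.1 ∈ M.delta y.1 (w i)) ∧
        x.2 = rank M w (i + 1, x.1)} \ kvOdd Q k

theorem sRun_reach {k i : ℕ} {x : Q × ℕ} (hx : x ∈ sRun M w k i) : (i, x.1) ∈ Reach M w := by
  cases i with
  | zero =>
    obtain rfl : x = (M.init, k) := hx
    exact ⟨fun _ => M.init, rfl, fun j hj => absurd hj (Nat.not_lt_zero j), rfl⟩
  | succ i => exact hx.1

theorem oRun_sub (k i : ℕ) : oRun M w k i ⊆ sRun M w k i := by
  induction i with
  | zero => exact Set.empty_subset _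
  | succ i ih =>
    intro x hx
    rw [oRun] at hx
    split_ifs at hx with h
    · exact hx.1
    · obtain ⟨⟨⟨y, hy, hd⟩, hr⟩, -⟩ := hx
      exact ⟨reach_edge (sRun_reach (ih hy)) ⟨rfl, hd⟩, hr⟩

theorem lang_complete [Finite Q] (M : NBW Q A) :
    M.Langᶜ ⊆ (KVMH M (2 * (M.acc)ᶜ.ncard)).Lang := by
  intro w hw
  set k := 2 * (M.acc)ᶜ.ncard with hk
  have hrank : ∀ i x, x ∈ sRun M w k i → rank M w (i, x.1) ≤ x.2 := by
    intro i x hx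
    cases i with
    | zero =>
      obtain rfl : x = (M.init, k) := hx
      exact rank_le hw _
    | succ i => exact hx.2.ge
  have hedge : ∀ i x l', x ∈ sRun M w k i → l' ∈ M.delta x.1 (w i) →
      rank M w (i + 1, l') ≤ x.2 ∧ (i + 1, l') ∈ Reach M w := by
    intro i x l' hx hl'
    have he : Edge M w (i, x.1) (i + 1, l') := ⟨rfl, hl'⟩
    exact ⟨(rank_edge hw (sRun_reach hx) he).trans (hrank i x hx),
      reach_edge (sRun_reach hx) he⟩
  refine ⟨fun i => (sRun M w k i, oRun M w k i), ⟨rfl, fun i => ?_⟩, ?_⟩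
  · rw [mem_delta]
    refine ⟨?_, ?_, fun h => ?_, fun h => ?_⟩
    · rintro ⟨l, n⟩ ⟨hl, hn⟩
      obtain rfl : n = rank M w (i + 1, l) := hn
      exact ⟨rank_le hw _, even_rank hw hl⟩
    · intro x hx l' hl'
      obtain ⟨h1, h2⟩ := hedge i x l' hx hl'
      exact ⟨_, h1, h2, rfl⟩
    · simp only at h
      simp only [oRun, h, if_true]
    · simp only at h
      refine ⟨{x | (∃ y ∈ oRun M w k i, x.1 ∈ M.delta y.1 (w i)) ∧
        x.2 = rank M w (i + 1, x.1)}, by simp only [oRun, h, if_false], ?_, ?_⟩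
      · rintro x ⟨⟨y, hy, hd⟩, hr⟩
        exact ⟨(hedge i y _ (oRun_sub k i hy) hd).2, hr⟩
      · intro x hx l' hl'
        exact ⟨_, (hedge i x l' (oRun_sub k i hx) hl').1, ⟨x, hx, hl'⟩, rfl⟩
  · by_contra! hcon
    obtain ⟨N, hN⟩ := hcon
    have hne : ∀ i ≥ N, oRun M w k i ≠ ∅ := hN
    obtain ⟨ρ, hρ⟩ := konig (fun j => {l | ∃ n, (l, n) ∈ oRun M w k (N + j)})
      (fun j l l' => l' ∈ M.delta l (w (N + j)))
      (fun j => by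
        obtain ⟨⟨l, n⟩, h⟩ := Set.nonempty_iff_ne_empty.2 (hne (N + j) (by omega))
        exact ⟨l, n, h⟩)
      (fun j l' hl' => by
        obtain ⟨n, hn⟩ := hl'
        have hn' : (l', n) ∈ oRun M w k (N + j + 1) := hn
        rw [oRun, if_neg (hne (N + j) (by omega))] at hn'
        obtain ⟨⟨⟨y, hy, hd⟩, -⟩, -⟩ := hn'
        exact ⟨y.1, ⟨y.2, hy⟩, hd⟩)
    -- The path is shifted by one so that all its levels are positive, where `sRun` holds ranks.
    refine no_even_path hw (p := fun j => (N + (j + 1), ρ (j + 1))) (fun j => ?_) fun j => ?_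
    · obtain ⟨⟨n, hn⟩, he⟩ := hρ (j + 1)
      exact ⟨sRun_reach (oRun_sub k _ hn), rfl, he⟩
    · obtain ⟨n, hn⟩ := (hρ (j + 1)).1
      have hn' : (ρ (j + 1), n) ∈ oRun M w k (N + j + 1) := hn
      have hs : n = rank M w (N + j + 1, ρ (j + 1)) := (oRun_sub k _ hn').2
      have hodd : (ρ (j + 1), n) ∉ kvOdd Q k := by
        rw [oRun, if_neg (hne (N + j) (by omega))] at hn'
        exact hn'.2
      by_contra h
      refine hodd ⟨?_, ?_⟩
      · show Odd n
        rw [hs]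
        exact Nat.not_even_iff_odd.1 h
      · show n ≤ k
        rw [hs]
        exact rank_le hw _

end KVMHProof

/-- For every NBW `A` and even `k' ≤ k`, `L(KVMH(A,k')) ⊆ L(KVMH(A,k))`; moreover for
`k = 2(|L| - |α|)`, `L(KVMH(A,k)) = Σ^ω \ L(A)`. -/
theorem kvmh_correct {Q A : Type*} [Fintype Q] [Fintype A] (M : NBW Q A) :
    (∀ k' k : ℕ, Even k' → Even k → k' ≤ k → (KVMH M k').Lang ⊆ (KVMH M k).Lang) ∧
    (KVMH M (2 * (Fintype.card Q - M.acc.ncard))).Lang = M.Langᶜ := by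
  refine ⟨fun k' k _ _ hk => KVMHProof.lang_mono M hk, ?_⟩
  have hcard : Fintype.card Q - M.acc.ncard = (M.acc)ᶜ.ncard := by
    rw [← Nat.card_eq_fintype_card, ← Set.ncard_add_ncard_compl M.acc]
    omega
  rw [hcard]
  exact Set.Subset.antisymm (KVMHProof.lang_sound M _) (KVMHProof.lang_complete M)
end

section
/- Let A = ⟨L, ι, Σ, δ, α⟩ be a nondeterministic Büchi automaton and let ≼ be a pre-order on L. Then ≼ is a simulation for A if and only if both of the following hold: (a) the set α is ≼-closed, and (b) for every ≼-closed set S ⊆ L and every σ ∈ Σ, the set Pre_σ(S) is ≼-closed. -/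
/-- A pre-order `≼` is a simulation for the NBW `A` iff (a) `α` is `≼`-closed and
(b) `Pre_σ` preserves `≼`-closedness for every `σ`. -/
theorem simulation_iff_closed {Q A : Type*} [Fintype Q] [Fintype A] (M : NBW Q A)
    (r : Q → Q → Prop) (hrefl : Reflexive r) (htrans : Transitive r) :
    M.Simulation r ↔
      (RClosed r M.acc ∧
        ∀ S : Set Q, RClosed r S → ∀ σ : A, RClosed r (M.PreSigma σ S)) := by
  constructor
  · rintro ⟨hstep, hacc⟩
    refine ⟨fun l1 l2 h h2 => hacc l2 h2 l1 h, ?_⟩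
    rintro S hS σ l3 l1 h31 ⟨l2, hl2S, hl2⟩
    obtain ⟨l4, h42, hl4⟩ := hstep l1 l2 l3 σ h31 hl2
    exact ⟨l4, hS l4 l2 h42 hl2S, hl4⟩
  · rintro ⟨hacc, hpre⟩
    refine ⟨fun l1 l2 l3 σ h31 hl2 => ?_, fun l hl l' h => hacc l' l h hl⟩
    -- The test set is the principal down-set of `l2`, which is closed by transitivity.
    have hdown : RClosed r {l | r l l2} := fun _ _ hab hb => htrans hab hb
    exact hpre _ hdown σ l3 l1 h31 ⟨l2, hrefl l2, hl2⟩
end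

section
/- Let A = ⟨L, ι, Σ, δ, α⟩ be a nondeterministic Büchi automaton and let ≼ be a simulation for A. Then for every ≼-closed set Y ⊆ L, the least fixed point μ x · (Pre(x) ∪ (Pre(Y) ∩ α)) is ≼-closed, and the set F_A = ν y · μ x · (Pre(x) ∪ (Pre(y) ∩ α)) is ≼-closed. -/
/-- `Pre` as an order-homomorphism on the powerset lattice. -/
def preHom {Q A : Type*} (M : NBW Q A) : Set Q →o Set Q :=
  ⟨M.Pre, by rintro S T hST l ⟨σ, l', hl', hd⟩; exact ⟨σ, l', hST hl', hd⟩⟩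

/-- The map `x ↦ Pre(x) ∪ (Pre(Y) ∩ α)`. -/
def innerHom {Q A : Type*} (M : NBW Q A) (Y : Set Q) : Set Q →o Set Q :=
  ⟨fun X => M.Pre X ∪ (M.Pre Y ∩ M.acc), by
    intro S T hST
    exact Set.union_subset_union_left _ ((preHom M).mono hST)⟩

/-- The map `y ↦ μ x · (Pre(x) ∪ (Pre(y) ∩ α))`. -/
def outerHom {Q A : Type*} (M : NBW Q A) : Set Q →o Set Q :=
  ⟨fun Y => OrderHom.lfp (innerHom M Y), by
    intro Y Y' hY
    apply OrderHom.lfp.mono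
    intro X
    exact Set.union_subset_union_right _
      (Set.inter_subset_inter_left _ ((preHom M).mono hY))⟩

/-- `F_A = ν y · μ x · (Pre(x) ∪ (Pre(y) ∩ α))`. -/
def NBW.FixF {Q A : Type*} (M : NBW Q A) : Set Q :=
  OrderHom.gfp (outerHom M)

theorem RClosed.sSup {Q : Type*} {r : Q → Q → Prop} {s : Set (Set Q)}
    (h : ∀ S ∈ s, RClosed r S) : RClosed r (sSup s) := by
  rintro l1 l2 hr ⟨S, hS, hl⟩
  exact ⟨S, hS, h S hS l1 l2 hr hl⟩

theorem RClosed.sInf {Q : Type*} {r : Q → Q → Prop} {s : Set (Set Q)}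
    (h : ∀ S ∈ s, RClosed r S) : RClosed r (sInf s) :=
  fun l1 l2 hr hl S hS => h S hS l1 l2 hr (hl S hS)

theorem RClosed.pre {Q A : Type*} {M : NBW Q A} {r : Q → Q → Prop} (hsim : M.Simulation r)
    {S : Set Q} (hS : RClosed r S) : RClosed r (M.Pre S) := by
  rintro l1 l2 hr ⟨σ, l', hl', hd⟩
  obtain ⟨l4, hr4, hd4⟩ := hsim.1 l2 l' l1 σ hr hd
  exact ⟨σ, l4, hS l4 l' hr4 hl', hd4⟩

theorem RClosed.lfp_innerHom {Q A : Type*} {M : NBW Q A} {r : Q → Q → Prop}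
    (hsim : M.Simulation r) {Y : Set Q} (hY : RClosed r Y) :
    RClosed r (OrderHom.lfp (innerHom M Y)) := by
  refine OrderHom.lfp_induction _ (fun X hX _ => ?_) (fun _ hs => RClosed.sSup hs)
  rintro l1 l2 hr (hl | ⟨hl, hacc⟩)
  · exact Or.inl (hX.pre hsim l1 l2 hr hl)
  · exact Or.inr ⟨hY.pre hsim l1 l2 hr hl, hsim.2 l2 hacc l1 hr⟩

/-- If `≼` is a simulation for `A`, then for every `≼`-closed `Y` the least fixed point
`μ x · (Pre(x) ∪ (Pre(Y) ∩ α))` is `≼`-closed, and `F_A = ν y · μ x · (Pre(x) ∪ (Pre(y) ∩ α))`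
is `≼`-closed. -/
theorem fixpoints_closed {Q A : Type*} [Fintype Q] [Fintype A] (M : NBW Q A)
    (r : Q → Q → Prop) (hrefl : Reflexive r) (htrans : Transitive r)
    (hsim : M.Simulation r) :
    (∀ Y : Set Q, RClosed r Y → RClosed r (OrderHom.lfp (innerHom M Y))) ∧
    RClosed r M.FixF := by
  exact ⟨fun _ hY => hY.lfp_innerHom hsim,
    OrderHom.gfp_induction _ (fun _ hY _ => hY.lfp_innerHom hsim) (fun _ hs => RClosed.sInf hs)⟩
end

section
/- For every nondeterministic Büchi automaton A = ⟨L, ι, Σ, δ, α⟩, L(A) ≠ ∅ if and only if ι ∈ F_A, where F_A = ν y · μ x · (Pre(x) ∪ (Pre(y) ∩ α)). -/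
/-- `M.Reaches Y n l`: some path of length exactly `n` leads from `l` to an accepting state that has
a successor in `Y`. -/
def NBW.Reaches {Q A : Type*} (M : NBW Q A) (Y : Set Q) : ℕ → Q → Prop
  | 0, l => l ∈ M.Pre Y ∩ M.acc
  | n + 1, l => l ∈ M.Pre {l' | M.Reaches Y n l'}

/-- The inner least fixed point consists of states at finite distance from `Pre(Y) ∩ α`. -/
theorem lfp_subset_reaches {Q A : Type*} (M : NBW Q A) (Y : Set Q) :
    OrderHom.lfp (innerHom M Y) ⊆ {l | ∃ n, M.Reaches Y n l} := by
  apply OrderHom.lfp_le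
  rintro l (⟨σ, l', ⟨n, hn⟩, hd⟩ | h)
  · exact ⟨n + 1, σ, l', hn, hd⟩
  · exact ⟨0, h⟩

theorem run_mem_fixF {Q A : Type*} (M : NBW Q A) (w : ℕ → A) (ρ : ℕ → Q)
    (hstep : ∀ i, ρ (i + 1) ∈ M.delta (ρ i) (w i))
    (hacc : ∀ n, ∃ i ≥ n, ρ i ∈ M.acc) : Set.range ρ ⊆ M.FixF := by
  apply OrderHom.le_gfp
  have hfix := OrderHom.map_lfp (innerHom M (Set.range ρ))
  -- Induction on the gap `k` between a position and a later accepting one.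
  have key : ∀ k n, ρ (n + k) ∈ M.acc → ρ n ∈ OrderHom.lfp (innerHom M (Set.range ρ)) := by
    intro k
    induction k with
    | zero =>
      intro n hn
      rw [← hfix]
      exact Or.inr ⟨⟨w n, ρ (n + 1), ⟨n + 1, rfl⟩, hstep n⟩, hn⟩
    | succ k ih =>
      intro n hn
      rw [← hfix]
      refine Or.inl ⟨w n, ρ (n + 1), ih (n + 1) ?_, hstep n⟩
      rwa [Nat.add_right_comm, Nat.add_assoc]
  rintro _ ⟨n, rfl⟩
  obtain ⟨i, hi, ha⟩ := hacc n
  exact key (i - n) n (by rwa [Nat.add_sub_cancel' hi])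

theorem exists_run_of_mem_fixF {Q A : Type*} (M : NBW Q A) (h : M.init ∈ M.FixF) :
    ∃ w, w ∈ M.Lang := by
  have hF : ∀ l ∈ M.FixF, ∃ n, M.Reaches M.FixF n l := by
    intro l hl
    apply lfp_subset_reaches
    have hfix : OrderHom.lfp (innerHom M M.FixF) = M.FixF := OrderHom.map_gfp (outerHom M)
    rwa [hfix]
  -- States paired with a distance that they realise.
  let S := {p : ℕ × Q // M.Reaches M.FixF p.1 p.2}
  have hnext : ∀ s : S, ∃ (σ : A) (t : S), t.1.2 ∈ M.delta s.1.2 σ ∧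
      (s.1.1 = 0 ∧ s.1.2 ∈ M.acc ∨ s.1.1 = t.1.1 + 1) := by
    rintro ⟨⟨n, l⟩, hl⟩
    cases n with
    | zero =>
      obtain ⟨⟨σ, l', hl', hd⟩, ha⟩ := hl
      obtain ⟨m, hm⟩ := hF l' hl'
      exact ⟨σ, ⟨(m, l'), hm⟩, hd, Or.inl ⟨rfl, ha⟩⟩
    | succ n =>
      obtain ⟨σ, l', hl', hd⟩ := hl
      exact ⟨σ, ⟨(n, l'), hl'⟩, hd, Or.inr rfl⟩
  choose letter next hd hrank using hnext
  obtain ⟨m, hm⟩ := hF _ h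
  let path : ℕ → S := fun i => Nat.rec ⟨(m, M.init), hm⟩ (fun _ s => next s) i
  have hacc : ∀ k n, (path n).1.1 = k → ∃ i ≥ n, (path i).1.2 ∈ M.acc := by
    intro k
    induction k with
    | zero =>
      intro n hn
      rcases hrank (path n) with ⟨_, ha⟩ | h1
      · exact ⟨n, le_rfl, ha⟩
      · omega
    | succ k ih =>
      intro n hn
      rcases hrank (path n) with ⟨h0, _⟩ | h1
      · omega
      · have hk : (path (n + 1)).1.1 = k := by
          change (next (path n)).1.1 = k
          omega
        obtain ⟨i, hi, ha⟩ := ih (n + 1) hk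
        exact ⟨i, by omega, ha⟩
  exact ⟨fun i => letter (path i), fun i => (path i).1.2, ⟨rfl, fun i => hd (path i)⟩,
    fun n => hacc _ n rfl⟩

/-- `L(A) ≠ ∅` iff `ι ∈ F_A` where `F_A = ν y · μ x · (Pre(x) ∪ (Pre(y) ∩ α))`. -/
theorem lang_nonempty_iff_fix {Q A : Type*} [Fintype Q] [Fintype A] (M : NBW Q A) :
    M.Lang ≠ ∅ ↔ M.init ∈ M.FixF := by
  rw [← Set.nonempty_iff_ne_empty]
  constructor
  · rintro ⟨w, ρ, ⟨h0, hstep⟩, hacc⟩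
    exact run_mem_fixF M w ρ hstep hacc ⟨0, h0⟩
  · exact exists_run_of_mem_fixF M
end

section
/- For every alternating Büchi automaton A₁ = ⟨L₁, ι₁, Σ, δ₁, α₁⟩, the partial order ≼_alt is a simulation for the nondeterministic Büchi automaton MH(A₁). -/
/-- The partial order `≼_alt`: `⟨s,o⟩ ≼ ⟨s',o'⟩` iff `s ⊆ s'`, `o ⊆ o'`, `o = ∅ ↔ o' = ∅`. -/
def altLe {Q : Type*} (p q : Set Q × Set Q) : Prop :=
  p.1 ⊆ q.1 ∧ p.2 ⊆ q.2 ∧ (p.2 = ∅ ↔ q.2 = ∅)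

/-- `≼_alt`-downward closure `↓S`. -/
def altDown {Q : Type*} (S : Set (Set Q × Set Q)) : Set (Set Q × Set Q) :=
  {p | ∃ q ∈ S, altLe p q}

/-- For every ABW `A₁`, the partial order `≼_alt` is a simulation for `MH(A₁)`. -/
theorem altLe_simulation {Q A : Type*} [Fintype Q] [Fintype A] (M : ABW Q A) :
    (MH M).Simulation altLe := by
  refine ⟨?_, fun l hl l' hr => hr.2.2.mpr hl⟩
  -- A successor of a larger macro-state is already a successor of the smaller one: the
  -- smaller one imposes fewer constraints, and both fall in the same case of `δ'` because
  -- `altLe` preserves emptiness of the second component. So `l4 = l2` works.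
  rintro l1 l2 l3 σ ⟨hs, ho, he⟩ h2
  refine ⟨l2, ⟨subset_rfl, subset_rfl, Iff.rfl⟩, ?_⟩
  by_cases h : l1.2 = ∅
  · simp only [MH, if_pos h] at h2
    simp only [MH, if_pos (he.mpr h)]
    obtain ⟨s', rfl, hS⟩ := h2
    exact ⟨s', rfl, fun l hl => hS l (hs hl)⟩
  · simp only [MH, if_neg h] at h2
    simp only [MH, if_neg (mt he.mp h)]
    obtain ⟨s', o', rfl, hsub, hS, hO⟩ := h2
    exact ⟨s', o', rfl, hsub, fun l hl => hS l (hs hl), fun l hl => hO l (ho hl)⟩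
end

section
/- Let L₁ be a finite set and let ≼_alt on 2^{L₁} × 2^{L₁} be defined by ⟨s, o⟩ ≼_alt ⟨s', o'⟩ iff s ⊆ s', o ⊆ o', and (o = ∅ ⟺ o' = ∅). For all pairs ⟨s₁, o₁⟩, ⟨s₂, o₂⟩ ∈ 2^{L₁} × 2^{L₁}: if o₁ ∩ o₂ ≠ ∅ then ↓{⟨s₁, o₁⟩} ∩ ↓{⟨s₂, o₂⟩} = ↓{⟨s₁ ∩ s₂, o₁ ∩ o₂⟩}; if o₁ = o₂ = ∅ then ↓{⟨s₁, o₁⟩} ∩ ↓{⟨s₂, o₂⟩} = ↓{⟨s₁ ∩ s₂, ∅⟩}; and otherwise (i.e., if exactly one of o₁, o₂ is empty, or both are nonempty with o₁ ∩ o₂ = ∅) the intersection ↓{⟨s₁, o₁⟩} ∩ ↓{⟨s₂, o₂⟩} is empty. -/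
/-- Intersections of `≼_alt`-closures of singletons. -/
theorem altDown_inter {L₁ : Type*} [Fintype L₁] (s₁ o₁ s₂ o₂ : Set L₁) :
    (o₁ ∩ o₂ ≠ ∅ →
      altDown {(s₁, o₁)} ∩ altDown {(s₂, o₂)} = altDown {(s₁ ∩ s₂, o₁ ∩ o₂)}) ∧
    (o₁ = ∅ ∧ o₂ = ∅ →
      altDown {(s₁, o₁)} ∩ altDown {(s₂, o₂)} = altDown {(s₁ ∩ s₂, (∅ : Set L₁))}) ∧
    (o₁ ∩ o₂ = ∅ ∧ ¬(o₁ = ∅ ∧ o₂ = ∅) →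
      altDown {(s₁, o₁)} ∩ altDown {(s₂, o₂)} = ∅) := by
  have mem : ∀ (p : Set L₁ × Set L₁) (s o : Set L₁), p ∈ altDown {(s, o)} ↔
      p.1 ⊆ s ∧ p.2 ⊆ o ∧ (p.2 = ∅ ↔ o = ∅) := by
    intro p s o
    simp [altDown, altLe]
  refine ⟨fun h => ?_, ?_, ?_⟩
  · have h₁ : o₁ ≠ ∅ := by rintro rfl; simp at h
    have h₂ : o₂ ≠ ∅ := by rintro rfl; simp at h
    ext p
    simp only [Set.mem_inter_iff, mem, Set.subset_inter_iff, h, h₁, h₂]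
    tauto
  · rintro ⟨rfl, rfl⟩
    ext p
    simp only [Set.mem_inter_iff, mem, Set.subset_inter_iff]
    tauto
  · rintro ⟨h, hne⟩
    refine Set.eq_empty_iff_forall_notMem.2 fun p hp => ?_
    obtain ⟨⟨-, h₁, e₁⟩, -, h₂, e₂⟩ := (and_congr (mem _ _ _) (mem _ _ _)).1 hp
    -- The second component lies in `o₁ ∩ o₂ = ∅`, so it is empty, and hence so are `o₁` and `o₂`.
    have hp₂ : p.2 = ∅ := Set.subset_empty_iff.1 (h ▸ Set.subset_inter h₁ h₂)
    exact hne ⟨e₁.1 hp₂, e₂.1 hp₂⟩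
end

section
/- For every nondeterministic Büchi automaton A, the pre-order ≼_univ is a simulation for the nondeterministic Büchi automaton KVMH(A). -/
theorem kvStep_of_le {Q A : Type*} (M : NBW Q A) (σ : A) {s t s' : Set (Q × ℕ)}
    (hst : ∀ x ∈ s, ∃ n' ≤ x.2, (x.1, n') ∈ t) (h : kvStep M σ t s') : kvStep M σ s s' := by
  intro p hp l' hl'
  obtain ⟨n, hn, hnt⟩ := hst p hp
  obtain ⟨m, hm, hms⟩ := h _ hnt l' hl'
  exact ⟨m, hm.trans hn, hms⟩

/-- For every NBW `A`, the pre-order `≼_univ` is a simulation for `KVMH(A)`. -/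
theorem univLe_simulation {Q A : Type*} [Fintype Q] [Fintype A] (M : NBW Q A) :
    (KVMH M (2 * (Fintype.card Q - M.acc.ncard))).Simulation univLe := by
  refine ⟨?_, fun l hl l' h => h.2.2.mpr hl⟩
  intro l1 l2 l3 σ hle hl2
  -- The successor `l2` of the larger state serves as the matching successor of `l3`.
  refine ⟨l2, ⟨fun x hx => ⟨x.2, le_rfl, hx⟩, fun x hx => ⟨x.2, le_rfl, hx⟩, Iff.rfl⟩, ?_⟩
  obtain ⟨hs, ho, hempty⟩ := hle
  by_cases h1 : l1.2 = ∅
  · have h3 : l3.2 = ∅ := hempty.mpr h1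
    simp only [KVMH, h1, h3, if_true, Set.mem_ofPred_eq] at hl2 ⊢
    obtain ⟨s', hs', heq, hstep⟩ := hl2
    exact ⟨s', hs', heq, kvStep_of_le M σ hs hstep⟩
  · have h3 : ¬ l3.2 = ∅ := fun h => h1 (hempty.mp h)
    simp only [KVMH, h1, h3, if_false, Set.mem_ofPred_eq] at hl2 ⊢
    obtain ⟨s', hs', o', heq, hsub, hstep, hostep⟩ := hl2
    exact ⟨s', hs', o', heq, hsub, kvStep_of_le M σ hs hstep, kvStep_of_le M σ ho hostep⟩
end

section
/- Let B = ⟨L_B, ι_B, Σ, δ_B, {β₁, β₂}⟩ be a generalized Büchi automaton with finite state set. Then L(B) ≠ ∅ if and only if ι_B ∈ F'_B, where F'_B = ν y · ( μ x₁ · [Pre(x₁) ∪ (Pre(y) ∩ β₁)] ∩ μ x₂ · [Pre(x₂) ∪ (Pre(y) ∩ β₂)] ). -/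
/-- A generalized Büchi automaton with two accepting sets `β₁, β₂`. -/
structure GBA (Q : Type*) (A : Type*) where
  init : Q
  delta : Q → A → Set Q
  acc1 : Set Q
  acc2 : Set Q

namespace GBA

variable {Q A : Type*}

def IsRun (B : GBA Q A) (w : ℕ → A) (ρ : ℕ → Q) : Prop :=
  ρ 0 = B.init ∧ ∀ i, ρ (i + 1) ∈ B.delta (ρ i) (w i)

/-- Language: words with a run visiting both `β₁` and `β₂` infinitely often. -/
def Lang (B : GBA Q A) : Set (ℕ → A) :=
  {w | ∃ ρ, B.IsRun w ρ ∧ (∀ n, ∃ i ≥ n, ρ i ∈ B.acc1) ∧ (∀ n, ∃ i ≥ n, ρ i ∈ B.acc2)}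

def Pre (B : GBA Q A) (S : Set Q) : Set Q :=
  {l | ∃ σ, ∃ l' ∈ S, l' ∈ B.delta l σ}

def preHom (B : GBA Q A) : Set Q →o Set Q :=
  ⟨B.Pre, by rintro S T hST l ⟨σ, l', hl', hd⟩; exact ⟨σ, l', hST hl', hd⟩⟩

/-- `x ↦ Pre(x) ∪ (Pre(Y) ∩ β)`. -/
def innerHom (B : GBA Q A) (β : Set Q) (Y : Set Q) : Set Q →o Set Q :=
  ⟨fun X => B.Pre X ∪ (B.Pre Y ∩ β), by
    intro S T hST
    exact Set.union_subset_union_left _ ((preHom B).mono hST)⟩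

/-- `y ↦ μx₁·[Pre(x₁) ∪ (Pre(y) ∩ β₁)] ∩ μx₂·[Pre(x₂) ∪ (Pre(y) ∩ β₂)]`. -/
def outerHom (B : GBA Q A) : Set Q →o Set Q :=
  ⟨fun Y => OrderHom.lfp (B.innerHom B.acc1 Y) ∩ OrderHom.lfp (B.innerHom B.acc2 Y), by
    intro Y Y' hY
    apply Set.inter_subset_inter <;>
    · apply OrderHom.lfp.mono
      intro X
      exact Set.union_subset_union_right _
        (Set.inter_subset_inter_left _ ((preHom B).mono hY))⟩

/-- `F'_B = ν y · (μx₁·[Pre(x₁) ∪ (Pre(y) ∩ β₁)] ∩ μx₂·[Pre(x₂) ∪ (Pre(y) ∩ β₂)])`. -/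
def FixF (B : GBA Q A) : Set Q := OrderHom.gfp B.outerHom

end GBA

/-- The product of two Büchi automata, with generalized Büchi condition
`{β₁, β₂} = {α₁ × L₂, L₁ × α₂}`. -/
def NBW.prod {Q1 Q2 A : Type*} (M1 : NBW Q1 A) (M2 : NBW Q2 A) : GBA (Q1 × Q2) A where
  init := (M1.init, M2.init)
  delta := fun p σ => {q | q.1 ∈ M1.delta p.1 σ ∧ q.2 ∈ M2.delta p.2 σ}
  acc1 := {p | p.1 ∈ M1.acc}
  acc2 := {p | p.2 ∈ M2.acc}

namespace GBA

variable {Q A : Type*}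

/-- The states from which some path of exactly `n` steps leads to a `β`-state having a successor
in `Y`. The union over `n` is `μ x · [Pre(x) ∪ (Pre(Y) ∩ β)]`. -/
def Layer (B : GBA Q A) (β Y : Set Q) : ℕ → Set Q
  | 0 => B.Pre Y ∩ β
  | n + 1 => B.Pre (Layer B β Y n)

lemma exists_layer_of_mem_lfp (B : GBA Q A) (β Y : Set Q) {q : Q}
    (hq : q ∈ OrderHom.lfp (B.innerHom β Y)) : ∃ n, q ∈ B.Layer β Y n := by
  have hle : OrderHom.lfp (B.innerHom β Y) ≤ {q | ∃ n, q ∈ B.Layer β Y n} := by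
    apply OrderHom.lfp_le
    rintro l (⟨σ, l', ⟨n, hn⟩, hd⟩ | h)
    · exact ⟨n + 1, σ, l', hn, hd⟩
    · exact ⟨0, h⟩
  exact hle hq

/-- Along a run, every state from which `β` is still to be visited lies in the least fixed point
built on the set of states of that run. -/
lemma run_mem_lfp (B : GBA Q A) (β : Set Q) {w : ℕ → A} {ρ : ℕ → Q}
    (hρ : ∀ i, ρ (i + 1) ∈ B.delta (ρ i) (w i)) (k i : ℕ) (hk : ρ (i + k) ∈ β) :
    ρ i ∈ OrderHom.lfp (B.innerHom β (Set.range ρ)) := by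
  rw [← OrderHom.map_lfp]
  induction k generalizing i with
  | zero => exact Or.inr ⟨⟨w i, ρ (i + 1), ⟨i + 1, rfl⟩, hρ i⟩, hk⟩
  | succ k ih =>
    have h := ih (i + 1) (by rwa [show i + 1 + k = i + (k + 1) by omega])
    rw [OrderHom.map_lfp] at h
    exact Or.inl ⟨w i, ρ (i + 1), h, hρ i⟩

/-- The accepting set selected by a mode: `β₁` for `true`, `β₂` for `false`. -/
def accSet (B : GBA Q A) : Bool → Set Q
  | true => B.acc1
  | false => B.acc2

lemma exists_layer_of_mem_fixF (B : GBA Q A) {q : Q} (hq : q ∈ B.FixF) (b : Bool) :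
    ∃ n, q ∈ B.Layer (B.accSet b) B.FixF n := by
  have h : q ∈ B.outerHom B.FixF := by
    rw [FixF, OrderHom.map_gfp]; exact hq
  cases b
  · exact B.exists_layer_of_mem_lfp _ _ h.2
  · exact B.exists_layer_of_mem_lfp _ _ h.1

/-- A state of `B` together with a promise: the accepting set `accSet mode` can be reached in
exactly `rank` steps, at a state having a successor in `FixF`. -/
structure Config (B : GBA Q A) where
  mode : Bool
  rank : ℕ
  state : Q
  mem : state ∈ B.Layer (B.accSet mode) B.FixF rank

/-- Every configuration has a successor: a positive rank decreases with the mode unchanged, and at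
rank `0` the mode switches. -/
lemma Config.exists_next (B : GBA Q A) (c : B.Config) :
    ∃ (σ : A) (c' : B.Config), c'.state ∈ B.delta c.state σ ∧
      (∀ n, c.rank = n + 1 → c'.rank = n ∧ c'.mode = c.mode) ∧
      (c.rank = 0 → c'.mode = !c.mode) := by
  obtain ⟨b, n, q, hq⟩ := c
  cases n with
  | zero =>
    obtain ⟨⟨σ, q', hq', hd⟩, -⟩ := hq
    obtain ⟨m, hm⟩ := B.exists_layer_of_mem_fixF hq' (!b)
    exact ⟨σ, ⟨!b, m, q', hm⟩, hd, by simp, by simp⟩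
  | succ n =>
    obtain ⟨σ, q', hq', hd⟩ := hq
    exact ⟨σ, ⟨b, n, q', hq'⟩, hd, by simp, by simp⟩

lemma Config.state_mem_accSet (B : GBA Q A) (c : B.Config) (h : c.rank = 0) :
    c.state ∈ B.accSet c.mode := by
  have hc := c.mem
  rw [h] at hc
  exact hc.2

lemma lang_nonempty_of_init_mem (B : GBA Q A) (h : B.init ∈ B.FixF) : B.Lang.Nonempty := by
  choose letter next hstep hpos hzero using Config.exists_next B
  obtain ⟨m, hm⟩ := B.exists_layer_of_mem_fixF h true
  let c : ℕ → B.Config := fun i => next^[i] ⟨true, m, B.init, hm⟩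
  have hc : ∀ i, c (i + 1) = next (c i) := fun i => Function.iterate_succ_apply' next i _
  -- The current promise is fulfilled after `rank` steps, the mode being constant until then.
  have hreach : ∀ n i, (c i).rank = n → (c (i + n)).rank = 0 ∧ (c (i + n)).mode = (c i).mode := by
    intro n
    induction n with
    | zero => intro i hi; exact ⟨hi, rfl⟩
    | succ n ih =>
      intro i hi
      obtain ⟨h1, h2⟩ := hpos (c i) n hi
      rw [← hc] at h1 h2
      have h3 := ih (i + 1) h1
      rw [h2, show i + 1 + n = i + (n + 1) by omega] at h3
      exact h3
  have hinf : ∀ b n, ∃ i ≥ n, (c i).state ∈ B.accSet b := by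
    intro b n
    have hmode : ∀ i, (c i).mode = b → ∃ j ≥ i, (c j).state ∈ B.accSet b := by
      intro i hi
      obtain ⟨h1, h2⟩ := hreach _ i rfl
      exact ⟨_, Nat.le_add_right _ _, hi ▸ h2 ▸ Config.state_mem_accSet B _ h1⟩
    by_cases hb : (c n).mode = b
    · exact hmode n hb
    ·
      obtain ⟨h1, h2⟩ := hreach _ n rfl
      have h3 := hzero _ h1
      rw [← hc, h2] at h3
      obtain ⟨j, hj, hj'⟩ := hmode (n + (c n).rank + 1) (by
        rw [h3]; revert hb; cases (c n).mode <;> cases b <;> simp)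
      exact ⟨j, by omega, hj'⟩
  refine ⟨fun i => letter (c i), fun i => (c i).state, ⟨rfl, fun i => ?_⟩, hinf true, hinf false⟩
  beta_reduce
  rw [hc]
  exact hstep (c i)

lemma init_mem_of_lang_nonempty (B : GBA Q A) (h : B.Lang.Nonempty) : B.init ∈ B.FixF := by
  obtain ⟨w, ρ, ⟨h0, hρ⟩, h1, h2⟩ := h
  have hle : Set.range ρ ≤ B.FixF := by
    apply OrderHom.le_gfp
    rintro _ ⟨i, rfl⟩
    obtain ⟨j₁, hj₁, hm₁⟩ := h1 i
    obtain ⟨j₂, hj₂, hm₂⟩ := h2 i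
    obtain ⟨k₁, rfl⟩ := Nat.exists_eq_add_of_le hj₁
    obtain ⟨k₂, rfl⟩ := Nat.exists_eq_add_of_le hj₂
    exact ⟨B.run_mem_lfp _ hρ k₁ i hm₁, B.run_mem_lfp _ hρ k₂ i hm₂⟩
  exact hle ⟨0, h0⟩

end GBA

/-- `L(B) ≠ ∅` iff `ι_B ∈ F'_B` for a generalized Büchi automaton `B`. -/
theorem gba_nonempty_iff_fix {Q A : Type*} [Fintype Q] [Fintype A] (B : GBA Q A) :
    B.Lang ≠ ∅ ↔ B.init ∈ B.FixF := by
  rw [← Set.nonempty_iff_ne_empty]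
  exact ⟨B.init_mem_of_lang_nonempty, B.lang_nonempty_of_init_mem⟩
end

section
/- Let A₁ = ⟨L₁, ι₁, Σ, δ₁, α₁⟩ be a nondeterministic Büchi automaton, let A₂ᶜ = KVMH(A₂) = ⟨L₂, ι₂, Σ, δ₂, α₂⟩ for a nondeterministic Büchi automaton A₂ over Σ, and let B = A₁ × A₂ᶜ be the product with generalized Büchi condition {β₁, β₂} = {α₁ × L₂, L₁ × α₂}. Define (l₁, l₂) ≼_inc (l₁', l₂') iff l₁ = l₁' and l₂ ≼_univ l₂'. Then ≼_inc is a simulation for B, i.e., for all states q₁, q₂, q₃ of B and all σ ∈ Σ, if q₃ ≼_inc q₁ and q₂ ∈ δ_B(q₁, σ) then there exists q₄ with q₄ ≼_inc q₂ and q₄ ∈ δ_B(q₃, σ); and both β₁ and β₂ are ≼_inc-closed. -/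
/-- The pre-order `≼_inc`: `(l₁,l₂) ≼ (l₁',l₂')` iff `l₁ = l₁'` and `l₂ ≼_univ l₂'`. -/
def incLe {Q1 Q2 : Type*} (p q : Q1 × (Set (Q2 × ℕ) × Set (Q2 × ℕ))) : Prop :=
  p.1 = q.1 ∧ univLe p.2 q.2

theorem univLe_refl {Q : Type*} (p : Set (Q × ℕ) × Set (Q × ℕ)) : univLe p p :=
  ⟨fun x hx => ⟨x.2, le_rfl, hx⟩, fun x hx => ⟨x.2, le_rfl, hx⟩, Iff.rfl⟩

theorem kvStep_of_dominated {Q A : Type*} {M : NBW Q A} {σ : A} {s t s' : Set (Q × ℕ)}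
    (hst : ∀ x ∈ s, ∃ n' ≤ x.2, (x.1, n') ∈ t) (ht : kvStep M σ t s') : kvStep M σ s s' := by
  intro x hx l' hl'
  obtain ⟨n, hn, hnt⟩ := hst x hx
  obtain ⟨m, hm, hms⟩ := ht _ hnt l' hl'
  exact ⟨m, hm.trans hn, hms⟩

/-- The `KVMH` transition function is antitone for `≼_univ`: smaller states have all the
successors of larger ones. -/
theorem KVMH_delta_antitone {Q A : Type*} {M : NBW Q A} {k : ℕ} {σ : A}
    {p q : Set (Q × ℕ) × Set (Q × ℕ)} (h : univLe p q) :
    (KVMH M k).delta q σ ⊆ (KVMH M k).delta p σ := by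
  obtain ⟨h1, h2, h3⟩ := h
  intro r hr
  by_cases hq : q.2 = ∅
  · simp only [KVMH, if_pos hq, if_pos (h3.2 hq)] at hr ⊢
    obtain ⟨s', hs', rfl, hstep⟩ := hr
    exact ⟨s', hs', rfl, kvStep_of_dominated h1 hstep⟩
  · simp only [KVMH, if_neg hq, if_neg (mt h3.1 hq)] at hr ⊢
    obtain ⟨s', hs', o', rfl, ho, hstep, hostep⟩ := hr
    exact ⟨s', hs', o', rfl, ho, kvStep_of_dominated h1 hstep, kvStep_of_dominated h2 hostep⟩

/-- `≼_inc` is a simulation for `B = A₁ × KVMH(A₂)`: the transition property holds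
and both `β₁` and `β₂` are `≼_inc`-closed. -/
theorem incLe_simulation {Q1 Q2 A : Type*} [Fintype Q1] [Fintype Q2] [Fintype A]
    (M1 : NBW Q1 A) (M2 : NBW Q2 A) (k : ℕ)
    (hk : k = 2 * (Fintype.card Q2 - M2.acc.ncard)) :
    (∀ q1 q2 q3 (σ : A), incLe q3 q1 → q2 ∈ (M1.prod (KVMH M2 k)).delta q1 σ →
        ∃ q4, incLe q4 q2 ∧ q4 ∈ (M1.prod (KVMH M2 k)).delta q3 σ) ∧
    RClosed incLe (M1.prod (KVMH M2 k)).acc1 ∧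
    RClosed incLe (M1.prod (KVMH M2 k)).acc2 := by
  refine ⟨?_, ?_, ?_⟩
  · rintro q1 q2 q3 σ ⟨heq, hle⟩ ⟨hd1, hd2⟩
    refine ⟨q2, ⟨rfl, univLe_refl _⟩, ?_, KVMH_delta_antitone hle hd2⟩
    rw [heq]
    exact hd1
  · rintro p q ⟨heq, -⟩ hq
    change p.1 ∈ M1.acc
    rw [heq]
    exact hq
  · rintro p q ⟨-, -, -, hempty⟩ hq
    exact hempty.2 hq
end

section
/- Let A = ⟨L, ι, Σ, δ, α⟩ be a nondeterministic Büchi automaton and k = 2(|L| − |α|). Then A is universal, i.e., L(A) = Σ^ω, if and only if ⟨{(ι, k)}, ∅⟩ ∉ ν y · μ x · (Pre^{KVMH(A)}(x) ∪ (Pre^{KVMH(A)}(y) ∩ α')), where α' = Q × {∅} is the set of accepting states of KVMH(A) and Pre^{KVMH(A)} is its predecessor operator. -/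
/-! ### Infinite paths in a graph -/

namespace KVProof

/-- `p` is an infinite path of the graph `R` that stays inside `Y`. -/
def IsPath {T : Type*} (R : T → T → Prop) (Y : Set T) (p : ℕ → T) : Prop :=
  ∀ i, p i ∈ Y ∧ R (p i) (p (i + 1))

/-- `Reach R Y B n y`: some path of length `n` inside `Y` leads from `y` to a vertex of `B`. -/
inductive Reach {T : Type*} (R : T → T → Prop) (Y B : Set T) : ℕ → T → Prop
  | zero {y} : y ∈ Y → y ∈ B → Reach R Y B 0 y
  | succ {n y y'} : y ∈ Y → R y y' → Reach R Y B n y' → Reach R Y B (n + 1) y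

lemma Reach.mem {T : Type*} {R : T → T → Prop} {Y B : Set T} {n : ℕ} {y : T}
    (h : Reach R Y B n y) : y ∈ Y := by
  cases h <;> assumption

lemma IsPath.shift {T : Type*} {R : T → T → Prop} {Y : Set T} {p : ℕ → T}
    (h : IsPath R Y p) (n : ℕ) : IsPath R Y (fun i => p (n + i)) :=
  fun i => h (n + i)

lemma IsPath.mono {T : Type*} {R : T → T → Prop} {Y Z : Set T} {p : ℕ → T}
    (h : IsPath R Y p) (hYZ : Y ⊆ Z) : IsPath R Z p :=
  fun i => ⟨hYZ (h i).1, (h i).2⟩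

/-- Prepends the vertex `u` to the path `p`. -/
def consPath {T : Type*} (u : T) (p : ℕ → T) : ℕ → T
  | 0 => u
  | i + 1 => p i

lemma IsPath.cons {T : Type*} {R : T → T → Prop} {Y : Set T} {p : ℕ → T} {u : T}
    (h : IsPath R Y p) (hu : u ∈ Y) (huR : R u (p 0)) : IsPath R Y (consPath u p) := by
  rintro (_ | i)
  · exact ⟨hu, huR⟩
  · exact h i

/-- If, inside `Y`, every vertex has a successor and can reach `B`, then every vertex of `Y`
starts an infinite path inside `Y` that meets `B` infinitely often: follow shortest paths to `B`,
so that the distance to `B` drops at each step taken outside `B`. -/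
lemma exists_recurrent_path {T : Type*} {R : T → T → Prop} {Y B : Set T}
    (hreach : ∀ y ∈ Y, ∃ n, Reach R Y B n y) (hsucc : ∀ y ∈ Y, ∃ y' ∈ Y, R y y')
    {y : T} (hy : y ∈ Y) :
    ∃ p : ℕ → T, p 0 = y ∧ IsPath R Y p ∧ ∀ n, ∃ i ≥ n, p i ∈ B := by
  classical
  let d : Y → ℕ := fun y => Nat.find (hreach y.1 y.2)
  have step : ∀ y : Y, ∃ y' : Y, R y.1 y'.1 ∧ (y.1 ∈ B ∨ d y' < d y) := by
    intro y
    have hd : Reach R Y B (d y) y.1 := Nat.find_spec (hreach y.1 y.2)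
    generalize hn : d y = n at hd
    cases hd with
    | zero h1 h2 =>
      obtain ⟨y', hy', hR⟩ := hsucc y.1 y.2
      exact ⟨⟨y', hy'⟩, hR, Or.inl h2⟩
    | @succ n _ y' h1 h2 h3 =>
      refine ⟨⟨y', h3.mem⟩, h2, Or.inr ?_⟩
      have : d ⟨y', h3.mem⟩ ≤ n := Nat.find_min' _ h3
      omega
  choose f hfR hfd using step
  let q : ℕ → Y := fun i => f^[i] ⟨y, hy⟩
  have hq : ∀ i, q (i + 1) = f (q i) := fun i => Function.iterate_succ_apply' f i _
  refine ⟨fun i => (q i).1, rfl, fun i => ⟨(q i).2, ?_⟩, ?_⟩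
  · change R (q i).1 (q (i + 1)).1
    rw [hq]
    exact hfR _
  · have key : ∀ m n, d (q n) = m → ∃ i ≥ n, (q i).1 ∈ B := by
      intro m
      induction m using Nat.strong_induction_on with
      | _ m ih =>
        intro n hn
        rcases hfd (q n) with h | h
        · exact ⟨n, le_rfl, h⟩
        · rw [← hq, hn] at h
          obtain ⟨i, hi, hB⟩ := ih _ h (n + 1) rfl
          exact ⟨i, by omega, hB⟩
    exact fun n => key _ n rfl

/-- König's lemma for a graph with finitely many vertices per level: the infinite path is the
limit, along a nonprincipal ultrafilter, of finite paths of growing length. -/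
lemma konig {Q : Type*} [Finite Q] (S : ℕ → Set Q) (E : ℕ → Q → Q → Prop)
    (hne : ∀ i, (S i).Nonempty) (hpred : ∀ i, ∀ q ∈ S (i + 1), ∃ q' ∈ S i, E i q' q) :
    ∃ p : ℕ → Q, ∀ i, p i ∈ S i ∧ E i (p i) (p (i + 1)) := by
  have fin : ∀ j, ∀ q ∈ S j, ∃ p : ℕ → Q, p j = q ∧ (∀ i ≤ j, p i ∈ S i) ∧
      ∀ i < j, E i (p i) (p (i + 1)) := by
    intro j
    induction j with
    | zero =>
      intro q hq
      refine ⟨fun _ => q, rfl, ?_, by simp⟩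
      intro i hi
      obtain rfl : i = 0 := by omega
      exact hq
    | succ j ih =>
      intro q hq
      obtain ⟨q', hq', hE⟩ := hpred j q hq
      obtain ⟨p, hpj, hpS, hpE⟩ := ih q' hq'
      refine ⟨fun i => if i ≤ j then p i else q, by simp, ?_, ?_⟩
      · intro i hi
        by_cases h : i ≤ j
        · simpa [h] using hpS i h
        · obtain rfl : i = j + 1 := by omega
          simpa using hq
      · intro i hi
        by_cases h : i + 1 ≤ j
        · have h' : i ≤ j := by omega
          simpa [h, h'] using hpE i h
        · obtain rfl : i = j := by omega
          simpa [hpj] using hE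
  have fin' : ∀ j, ∃ p : ℕ → Q, (∀ i ≤ j, p i ∈ S i) ∧ ∀ i < j, E i (p i) (p (i + 1)) := by
    intro j
    obtain ⟨q, hq⟩ := hne j
    obtain ⟨p, -, h⟩ := fin j q hq
    exact ⟨p, h⟩
  choose P hPS hPE using fin'
  have lim : ∀ i, ∃ q, ∀ᶠ j in (Filter.hyperfilter ℕ : Filter ℕ), P j i = q := by
    intro i
    obtain ⟨q, hq⟩ :=
      Ultrafilter.eq_pure_of_finite ((Filter.hyperfilter ℕ).map fun j => P j i)
    refine ⟨q, ?_⟩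
    have : ({q} : Set Q) ∈ (Filter.hyperfilter ℕ).map fun j => P j i := by
      rw [hq]; simp
    exact this
  choose p hp using lim
  refine ⟨p, fun i => ?_⟩
  have hlarge : ∀ᶠ j in (Filter.hyperfilter ℕ : Filter ℕ), i + 1 ≤ j := by
    apply Filter.hyperfilter_le_cofinite
    rw [Nat.cofinite_eq_atTop]
    exact Filter.eventually_ge_atTop _
  obtain ⟨j, ⟨h1, h2⟩, h3⟩ := (((hp i).and (hp (i + 1))).and hlarge).exists
  rw [← h1, ← h2]
  exact ⟨hPS j i (by omega), hPE j i (by omega)⟩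

/-- An antitone sequence of natural numbers is eventually constant. -/
lemma eventually_const (f : ℕ → ℕ) (h : ∀ i, f (i + 1) ≤ f i) :
    ∃ N, ∀ i, f (N + i) = f N := by
  obtain ⟨N, hN⟩ := WellFounded.min_mem (wellFounded_lt (α := ℕ)) (Set.range f) ⟨f 0, 0, rfl⟩
  have hanti : Antitone f := antitone_nat_of_succ_le h
  refine ⟨N, fun i => le_antisymm (hanti (by omega)) ?_⟩
  rw [hN]
  exact not_lt.mp (WellFounded.not_lt_min (wellFounded_lt (α := ℕ)) (Set.range f) ⟨N + i, rfl⟩)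

/-! ### The fixed point characterises nonemptiness -/

/-- `FixF` consists of the states from which, on some word, a run visits accepting states
infinitely often. -/
lemma mem_fixF_iff {T A : Type*} (K : NBW T A) (q : T) :
    q ∈ K.FixF ↔ ∃ (w : ℕ → A) (p : ℕ → T), p 0 = q ∧
      (∀ i, p (i + 1) ∈ K.delta (p i) (w i)) ∧ ∀ n, ∃ i ≥ n, p i ∈ K.acc := by
  constructor
  · intro hq
    have hfix : OrderHom.lfp (innerHom K K.FixF) = K.FixF :=
      OrderHom.map_gfp (outerHom K)
    have hinner : K.Pre K.FixF ∪ (K.Pre K.FixF ∩ K.acc) = K.FixF := by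
      have := OrderHom.map_lfp (innerHom K K.FixF)
      rw [hfix] at this
      exact this
    let R : T → T → Prop := fun a b => ∃ σ, b ∈ K.delta a σ
    have hsucc : ∀ y ∈ K.FixF, ∃ y' ∈ K.FixF, R y y' := by
      intro y hy
      rw [← hinner] at hy
      obtain ⟨σ, l', hl', hd⟩ : y ∈ K.Pre K.FixF := by
        rcases hy with h | h
        · exact h
        · exact h.1
      exact ⟨l', hl', σ, hd⟩
    have hreach : ∀ y ∈ K.FixF, ∃ n, Reach R K.FixF K.acc n y := by
      have : OrderHom.lfp (innerHom K K.FixF) ≤ {y | ∃ n, Reach R K.FixF K.acc n y} := by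
        apply OrderHom.lfp_le
        rintro y (⟨σ, l', ⟨n, hn⟩, hd⟩ | ⟨hpre, hacc⟩)
        · refine ⟨n + 1, Reach.succ ?_ ⟨σ, hd⟩ hn⟩
          rw [← hinner]
          exact Or.inl ⟨σ, l', hn.mem, hd⟩
        · refine ⟨0, Reach.zero ?_ hacc⟩
          rw [← hinner]
          exact Or.inl hpre
      rw [hfix] at this
      exact this
    obtain ⟨p, hp0, hp, hacc⟩ := exists_recurrent_path hreach hsucc hq
    choose w hw using fun i => (hp i).2
    exact ⟨w, p, hp0, hw, hacc⟩
  · let Y : Set T := {q | ∃ (w : ℕ → A) (p : ℕ → T), p 0 = q ∧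
      (∀ i, p (i + 1) ∈ K.delta (p i) (w i)) ∧ ∀ n, ∃ i ≥ n, p i ∈ K.acc}
    suffices h : Y ≤ K.FixF from fun hq => h hq
    apply OrderHom.le_gfp
    rintro q ⟨w, p, rfl, hp, hacc⟩
    have hY : ∀ i, p i ∈ Y := by
      intro i
      refine ⟨fun j => w (i + j), fun j => p (i + j), rfl, fun j => hp (i + j), fun n => ?_⟩
      obtain ⟨m, hm, hmacc⟩ := hacc (i + n)
      refine ⟨m - i, by omega, ?_⟩
      change p (i + (m - i)) ∈ K.acc
      rwa [show i + (m - i) = m by omega]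
    change p 0 ∈ OrderHom.lfp (innerHom K Y)
    obtain ⟨m, -, hm⟩ := hacc 0
    have down : ∀ j ≤ m, p (m - j) ∈ OrderHom.lfp (innerHom K Y) := by
      intro j
      induction j with
      | zero =>
        intro _
        rw [← OrderHom.map_lfp]
        exact Or.inr ⟨⟨w m, p (m + 1), hY _, hp m⟩, hm⟩
      | succ j ih =>
        intro hj
        rw [← OrderHom.map_lfp]
        refine Or.inl ⟨w (m - (j + 1)), p (m - j), ih (by omega), ?_⟩
        have := hp (m - (j + 1))
        rwa [show m - (j + 1) + 1 = m - j by omega] at this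
    simpa using down m le_rfl

/-! ### The run graph and its ranking -/

section Rank

variable {Q A : Type*} (M : NBW Q A) (w : ℕ → A)

/-- Edges of the run graph of `M` on `w`; the vertex `(i, l)` is the state `l` at time `i`. -/
def Edge (u v : ℕ × Q) : Prop := v.1 = u.1 + 1 ∧ v.2 ∈ M.delta u.2 (w u.1)

/-- The vertices of the run graph, those reachable from the initial one. -/
def Vert : Set (ℕ × Q) := {v | Relation.ReflTransGen (Edge M w) (0, M.init) v}

/-- The accepting positions, at any time. -/
def accV : Set (ℕ × Q) := {v | v.2 ∈ M.acc}

open Classical in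
/-- The decreasing sequence of subgraphs that defines ranks: from `V 2j` the vertices that start
no infinite path are removed, and from `V (2j+1)` those that reach no accepting vertex. -/
noncomputable def V : ℕ → Set (ℕ × Q)
  | 0 => Vert M w
  | n + 1 =>
    if Even n then {v | ∃ p : ℕ → ℕ × Q, p 0 = v ∧ IsPath (Edge M w) (V n) p}
    else {v | ∃ d, Reach (Edge M w) (V n) (accV M) d v}

variable {M w}

lemma V_even {n : ℕ} (hn : Even n) {v : ℕ × Q} :
    v ∈ V M w (n + 1) ↔ ∃ p : ℕ → ℕ × Q, p 0 = v ∧ IsPath (Edge M w) (V M w n) p := by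
  simp [V, hn]

lemma V_odd {n : ℕ} (hn : ¬ Even n) {v : ℕ × Q} :
    v ∈ V M w (n + 1) ↔ ∃ d, Reach (Edge M w) (V M w n) (accV M) d v := by
  simp only [V, hn, if_false, Set.mem_ofPred_eq]

lemma V_succ_subset (n : ℕ) : V M w (n + 1) ⊆ V M w n := by
  intro v hv
  by_cases hn : Even n
  · obtain ⟨p, rfl, hp⟩ := (V_even hn).1 hv
    exact (hp 0).1
  · obtain ⟨d, hd⟩ := (V_odd hn).1 hv
    exact hd.mem

lemma V_anti : Antitone (V M w) := antitone_nat_of_succ_le V_succ_subset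

lemma vert_edge {u v : ℕ × Q} (hu : u ∈ Vert M w) (h : Edge M w u v) : v ∈ Vert M w :=
  Relation.ReflTransGen.tail hu h

lemma path_level {Y : Set (ℕ × Q)} {p : ℕ → ℕ × Q} (hp : IsPath (Edge M w) Y p) (i : ℕ) :
    (p i).1 = (p 0).1 + i := by
  induction i with
  | zero => rfl
  | succ i ih => rw [(hp i).2.1, ih]; rfl

/-- On a rejected word no infinite path of the run graph is accepting: prefixing it by a path
from the initial vertex would give an accepting run. -/
lemma no_acc_path (hw : w ∉ M.Lang) {p : ℕ → ℕ × Q} (hp : IsPath (Edge M w) (Vert M w) p)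
    (hacc : ∀ n, ∃ i ≥ n, p i ∈ accV M) : False := by
  have h0 : Relation.ReflTransGen (Edge M w) (0, M.init) (p 0) := (hp 0).1
  have key : ∃ p : ℕ → ℕ × Q, p 0 = (0, M.init) ∧ IsPath (Edge M w) Set.univ p ∧
      ∀ n, ∃ i ≥ n, p i ∈ accV M := by
    generalize ((0, M.init) : ℕ × Q) = a at h0 ⊢
    induction h0 using Relation.ReflTransGen.head_induction_on with
    | refl => exact ⟨p, rfl, hp.mono (Set.subset_univ _), hacc⟩
    | head huv _ ih =>
      obtain ⟨p', hp0, hp', hacc'⟩ := ih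
      refine ⟨consPath _ p', rfl, hp'.cons trivial (hp0 ▸ huv), fun n => ?_⟩
      obtain ⟨i, hi, h⟩ := hacc' n
      exact ⟨i + 1, by omega, h⟩
  obtain ⟨p', hp0, hp', hacc'⟩ := key
  refine hw ⟨fun i => (p' i).2, ⟨by simp [hp0], fun i => ?_⟩, hacc'⟩
  have h1 := (hp' i).2.2
  rw [path_level hp' i, hp0] at h1
  simpa using h1

/-- On a rejected word each two removals eventually cost at least one nonaccepting state per level:
a vertex of `V (2j+1)` that reaches no accepting vertex starts an infinite path of such vertices,
all of which are nonaccepting and removed. -/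
lemma count [Finite Q] (hw : w ∉ M.Lang) (j : ℕ) :
    ∃ N, ∀ i ≥ N, {l | l ∉ M.acc ∧ (i, l) ∈ V M w (2 * j)}.ncard ≤ (M.acc)ᶜ.ncard - j := by
  induction j with
  | zero =>
    exact ⟨0, fun i _ => Set.ncard_le_ncard (fun l hl => hl.1) (Set.toFinite _)⟩
  | succ j ih =>
    obtain ⟨N, hN⟩ := ih
    have hev : Even (2 * j) := even_two_mul j
    have hodd : ¬ Even (2 * j + 1) := by simp
    have hsucc : ∀ y ∈ V M w (2 * j + 1), ∃ y' ∈ V M w (2 * j + 1), Edge M w y y' := by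
      intro y hy
      obtain ⟨p, rfl, hp⟩ := (V_even hev).1 hy
      exact ⟨p 1, (V_even hev).2 ⟨_, rfl, hp.shift 1⟩, (hp 0).2⟩
    by_cases hall : ∀ y ∈ V M w (2 * j + 1), ∃ d,
        Reach (Edge M w) (V M w (2 * j + 1)) (accV M) d y
    · have hempty : V M w (2 * j + 1) = ∅ := by
        rw [Set.eq_empty_iff_forall_notMem]
        intro y hy
        obtain ⟨p, -, hp, hacc⟩ := exists_recurrent_path hall hsucc hy
        exact no_acc_path hw (hp.mono (V_anti (Nat.zero_le _))) hacc
      refine ⟨0, fun i _ => ?_⟩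
      have : {l | l ∉ M.acc ∧ (i, l) ∈ V M w (2 * (j + 1))} = ∅ := by
        rw [Set.eq_empty_iff_forall_notMem]
        rintro l ⟨-, hl⟩
        have h2 := V_succ_subset (2 * j + 1) hl
        rw [hempty] at h2
        exact h2
      rw [this]
      simp
    · push Not at hall
      obtain ⟨v, hv, hno⟩ := hall
      obtain ⟨p, hp0, hp⟩ := (V_even hev).1 hv
      have hpV : ∀ i, p i ∈ V M w (2 * j + 1) := fun i =>
        (V_even hev).2 ⟨_, rfl, hp.shift i⟩
      have hpno : ∀ i d, ¬ Reach (Edge M w) (V M w (2 * j + 1)) (accV M) d (p i) := by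
        intro i
        induction i with
        | zero => rw [hp0]; exact hno
        | succ i ihi => exact fun d hd => ihi (d + 1) (Reach.succ (hpV i) (hp i).2 hd)
      refine ⟨max N v.1, fun i hi => ?_⟩
      have hi1 : N ≤ i := le_trans (le_max_left _ _) hi
      have hi2 : v.1 ≤ i := le_trans (le_max_right _ _) hi
      have hlev : (p (i - v.1)).1 = i := by
        rw [path_level hp, hp0]; omega
      have hlt : {l | l ∉ M.acc ∧ (i, l) ∈ V M w (2 * (j + 1))}.ncard <
          {l | l ∉ M.acc ∧ (i, l) ∈ V M w (2 * j)}.ncard := by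
        apply Set.ncard_lt_ncard _ (Set.toFinite _)
        have hsubset : {l | l ∉ M.acc ∧ (i, l) ∈ V M w (2 * (j + 1))} ⊆
            {l | l ∉ M.acc ∧ (i, l) ∈ V M w (2 * j)} :=
          fun l hl => ⟨hl.1, V_anti (show 2 * j ≤ 2 * (j + 1) by omega) hl.2⟩
        rw [Set.ssubset_iff_of_subset hsubset]
        have hpair : (i, (p (i - v.1)).2) = p (i - v.1) :=
          Prod.ext hlev.symm rfl
        refine ⟨(p (i - v.1)).2, ⟨fun h => ?_, ?_⟩, fun h => ?_⟩
        · exact hpno (i - v.1) 0 (Reach.zero (hpV _) h)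
        · rw [hpair]; exact (hp _).1
        · have h2 := h.2
          rw [hpair] at h2
          obtain ⟨d, hd⟩ := (V_odd hodd).1 h2
          exact hpno _ d hd
      have := hN i hi1
      omega

/-- On a rejected word all ranks are at most `2 (|L| - |α|)`. -/
lemma V_eventually_empty [Finite Q] (hw : w ∉ M.Lang) :
    V M w (2 * (M.acc)ᶜ.ncard + 1) = ∅ := by
  obtain ⟨N, hN⟩ := count hw (M.acc)ᶜ.ncard
  rw [Set.eq_empty_iff_forall_notMem]
  intro v hv
  obtain ⟨p, rfl, hp⟩ := (V_even (even_two_mul _)).1 hv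
  refine no_acc_path hw (hp.mono (V_anti (Nat.zero_le _))) fun n => ⟨max n N, le_max_left _ _, ?_⟩
  by_contra hna
  have hlev : N ≤ (p (max n N)).1 := by
    rw [path_level hp]
    have := le_max_right n N
    omega
  have h0 := hN _ hlev
  rw [Nat.sub_self, Nat.le_zero, Set.ncard_eq_zero (Set.toFinite _)] at h0
  exact Set.eq_empty_iff_forall_notMem.1 h0 (p (max n N)).2 ⟨hna, (hp _).1⟩

/-- The run graph of a rejected word has an odd ranking: ranks are bounded by `2 (|L| - |α|)`,
even on accepting vertices, nonincreasing along edges, and no infinite path has only even ranks. -/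
lemma exists_ranking [Finite Q] (hw : w ∉ M.Lang) :
    ∃ f : ℕ × Q → ℕ,
      (∀ v ∈ Vert M w, f v ≤ 2 * (M.acc)ᶜ.ncard ∧ (v.2 ∈ M.acc → Even (f v))) ∧
      (∀ u ∈ Vert M w, ∀ v, Edge M w u v → f v ≤ f u) ∧
      (∀ p, IsPath (Edge M w) (Vert M w) p → ∃ i, ¬ Even (f (p i))) := by
  have hex : ∀ v, v ∈ Vert M w → ∃ n, v ∈ V M w n ∧ v ∉ V M w (n + 1) ∧
      n ≤ 2 * (M.acc)ᶜ.ncard := by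
    intro v hv
    by_contra! hcon
    have : ∀ n ≤ 2 * (M.acc)ᶜ.ncard + 1, v ∈ V M w n := by
      intro n
      induction n with
      | zero => exact fun _ => hv
      | succ n ih =>
        intro hn
        by_contra hnot
        have := hcon n (ih (by omega)) hnot
        omega
    have h2 := this _ le_rfl
    rw [V_eventually_empty hw] at h2
    exact h2
  have hex' : ∀ v, ∃ n, v ∈ Vert M w → v ∈ V M w n ∧ v ∉ V M w (n + 1) ∧
      n ≤ 2 * (M.acc)ᶜ.ncard := by
    intro v
    by_cases hv : v ∈ Vert M w
    · obtain ⟨n, hn⟩ := hex v hv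
      exact ⟨n, fun _ => hn⟩
    · exact ⟨0, fun h => absurd h hv⟩
  choose f hf using hex'
  have hmono : ∀ u ∈ Vert M w, ∀ v, Edge M w u v → f v ≤ f u := by
    intro u hu v huv
    obtain ⟨hu1, hu2, -⟩ := hf u hu
    obtain ⟨hv1, -, -⟩ := hf v (vert_edge hu huv)
    by_contra! hlt
    have hv3 : v ∈ V M w (f u + 1) := V_anti hlt hv1
    apply hu2
    by_cases hn : Even (f u)
    · obtain ⟨p, rfl, hp⟩ := (V_even hn).1 hv3
      exact (V_even hn).2 ⟨consPath u p, rfl, hp.cons hu1 huv⟩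
    · obtain ⟨d, hd⟩ := (V_odd hn).1 hv3
      exact (V_odd hn).2 ⟨d + 1, Reach.succ hu1 huv hd⟩
  refine ⟨f, fun v hv => ⟨(hf v hv).2.2, fun hacc => ?_⟩, hmono, fun p hp => ?_⟩
  · by_contra hn
    exact (hf v hv).2.1 ((V_odd hn).2 ⟨0, Reach.zero (hf v hv).1 hacc⟩)
  · by_contra! hev
    obtain ⟨N, hN⟩ := eventually_const (fun i => f (p i))
      (fun i => hmono _ (hp i).1 _ (hp i).2)
    apply (hf (p N) (hp N).1).2.1
    refine (V_even (hev N)).2 ⟨fun i => p (N + i), rfl, fun i => ⟨?_, (hp (N + i)).2⟩⟩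
    have := (hf (p (N + i)) (hp (N + i)).1).1
    rwa [show f (p (N + i)) = f (p N) from hN i] at this

end Rank

/-! ### Correctness of the complementation -/

section Compl

variable {Q A : Type*} {M : NBW Q A} {k : ℕ}

/-- The part of a transition of `KVMH` that concerns the first component. -/
lemma delta_fst {p q : Set (Q × ℕ) × Set (Q × ℕ)} {σ : A} (h : q ∈ (KVMH M k).delta p σ) :
    q.1 ∈ Qk M k ∧ kvStep M σ p.1 q.1 := by
  by_cases hp : p.2 = ∅
  · simp only [KVMH, hp, if_true] at h
    obtain ⟨s', hs', rfl, hst⟩ := h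
    exact ⟨hs', hst⟩
  · simp only [KVMH, hp, if_false] at h
    obtain ⟨s', hs', o', rfl, -, hst, -⟩ := h
    exact ⟨hs', hst⟩

/-- Along an accepting run of `M` the least rank is eventually constant, and even.
Once the obligation set has been emptied and refilled, it tracks this least rank forever,
so that an accepting run of `KVMH` is impossible. -/
lemma sound {w : ℕ → A} {P : ℕ → Set (Q × ℕ) × Set (Q × ℕ)}
    (hP0 : P 0 = ({(M.init, k)}, ∅))
    (hP : ∀ i, P (i + 1) ∈ (KVMH M k).delta (P i) (w i))
    (hPacc : ∀ n, ∃ i ≥ n, P i ∈ (KVMH M k).acc) : w ∉ M.Lang := by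
  classical
  rintro ⟨ρ, ⟨hρ0, hρ⟩, hρacc⟩
  have hex : ∀ i, ∃ n, (ρ i, n) ∈ (P i).1 := by
    intro i
    induction i with
    | zero => exact ⟨k, by rw [hP0, hρ0]; rfl⟩
    | succ i ih =>
      obtain ⟨n, hn⟩ := ih
      obtain ⟨n', -, hn'⟩ := (delta_fst (hP i)).2 _ hn _ (hρ i)
      exact ⟨n', hn'⟩
  let r : ℕ → ℕ := fun i => Nat.find (hex i)
  have hr : ∀ i, (ρ i, r i) ∈ (P i).1 := fun i => Nat.find_spec (hex i)
  have hrmin : ∀ i n, (ρ i, n) ∈ (P i).1 → r i ≤ n := fun i n h => Nat.find_min' _ h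
  obtain ⟨N, hN⟩ := eventually_const r (fun i => by
    obtain ⟨n', hle, hn'⟩ := (delta_fst (hP i)).2 _ (hr i) _ (hρ i)
    exact (hrmin _ _ hn').trans hle)
  have hc : ∀ i ≥ N, r i = r N := by
    intro i hi
    have := hN (i - N)
    rwa [show N + (i - N) = i by omega] at this
  have heven : Even (r N) := by
    obtain ⟨i, hi, hacc⟩ := hρacc (N + 1)
    obtain ⟨i, rfl⟩ : ∃ i', i = i' + 1 := ⟨i - 1, by omega⟩
    have := ((delta_fst (hP i)).1 _ (hr (i + 1))).2 hacc
    rwa [hc _ (by omega)] at this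
  have hnotodd : ∀ l : Q, (l, r N) ∉ kvOdd Q k := fun l h =>
    (Nat.not_even_iff_odd.2 h.1) heven
  obtain ⟨j, hj, hjacc⟩ := hPacc N
  have hjacc : (P j).2 = ∅ := hjacc
  have track : ∀ i, (ρ (j + 1 + i), r N) ∈ (P (j + 1 + i)).2 := by
    intro i
    induction i with
    | zero =>
      have h := hP j
      have h1 := hr (j + 1)
      rw [hc _ (by omega)] at h1
      simp only [KVMH, hjacc, if_true] at h
      obtain ⟨s', hs', heq, hst⟩ := h
      rw [Nat.add_zero]
      rw [heq] at h1 ⊢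
      exact ⟨h1, hnotodd _⟩
    | succ i ih =>
      have h := hP (j + 1 + i)
      have hne : ¬ (P (j + 1 + i)).2 = ∅ := fun h0 => by rw [h0] at ih; exact ih
      simp only [KVMH, hne, if_false] at h
      obtain ⟨s', hs', o', heq, hsub, hst, hst'⟩ := h
      obtain ⟨n', hle, hn'⟩ := hst' _ ih _ (hρ _)
      have hge := hrmin (j + 1 + i + 1) n' (by rw [heq]; exact hsub hn')
      rw [hc _ (by omega)] at hge
      have hle' : n' ≤ r N := hle
      obtain rfl : n' = r N := le_antisymm hle' hge
      rw [← Nat.add_assoc, heq]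
      exact ⟨hn', hnotodd _⟩
  obtain ⟨j', hj', hacc'⟩ := hPacc (j + 1)
  have hacc' : (P j').2 = ∅ := hacc'
  have := track (j' - (j + 1))
  rw [show j + 1 + (j' - (j + 1)) = j' by omega, hacc'] at this
  exact this

/-- The first component, at time `i`, of the run of `KVMH` given by the ranking `g`. -/
def rankSet (M : NBW Q A) (w : ℕ → A) (g : ℕ → Q → ℕ) (i : ℕ) : Set (Q × ℕ) :=
  {x | (i, x.1) ∈ Vert M w ∧ x.2 = g i x.1}

open Classical in
/-- The second component, at time `i`, of the run of `KVMH` given by the ranking `g`. -/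
noncomputable def oblSet (M : NBW Q A) (w : ℕ → A) (k : ℕ) (g : ℕ → Q → ℕ) : ℕ → Set (Q × ℕ)
  | 0 => ∅
  | i + 1 =>
    if oblSet M w k g i = ∅ then rankSet M w g (i + 1) \ kvOdd Q k
    else {x | x.2 = g (i + 1) x.1 ∧ ∃ y ∈ oblSet M w k g i, x.1 ∈ M.delta y.1 (w i)} \ kvOdd Q k

/-- A word rejected by `M` is accepted by `KVMH`. If the obligation sets of the run given by an
odd ranking stayed nonempty, then König's lemma would give an infinite path of even ranks. -/
lemma complete [Finite Q] {w : ℕ → A} (hk : k = 2 * (M.acc)ᶜ.ncard) (hw : w ∉ M.Lang) :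
    ∃ P : ℕ → Set (Q × ℕ) × Set (Q × ℕ), P 0 = ({(M.init, k)}, ∅) ∧
      (∀ i, P (i + 1) ∈ (KVMH M k).delta (P i) (w i)) ∧
      ∀ n, ∃ i ≥ n, P i ∈ (KVMH M k).acc := by
  obtain ⟨f, hf1, hf2, hf3⟩ := exists_ranking hw
  rw [← hk] at hf1
  -- `KVMH` starts with rank `k`, so the ranking is raised to `k` at time `0`.
  let g : ℕ → Q → ℕ := fun i l => if i = 0 then k else f (i, l)
  have hg1 : ∀ i l, (i, l) ∈ Vert M w → g i l ≤ k ∧ (l ∈ M.acc → Even (g i l)) := by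
    intro i l hv
    by_cases hi : i = 0
    · simp [g, hi, hk]
    · simpa [g, hi] using hf1 _ hv
  have hg2 : ∀ i l l', (i, l) ∈ Vert M w → l' ∈ M.delta l (w i) → g (i + 1) l' ≤ g i l := by
    intro i l l' hv hl'
    have hE : Edge M w (i, l) (i + 1, l') := ⟨rfl, hl'⟩
    by_cases hi : i = 0
    · subst hi
      simpa [g] using (hf1 _ (vert_edge hv hE)).1
    · simpa [g, hi] using hf2 _ hv _ hE
  have hs0 : rankSet M w g 0 = {(M.init, k)} := by
    ext ⟨l, n⟩
    have hlev : (0, l) ∈ Vert M w ↔ l = M.init := by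
      constructor
      · intro h
        rcases Relation.ReflTransGen.cases_tail h with h | ⟨u, -, h⟩
        · exact (Prod.ext_iff.1 h).2
        · exact absurd h.1 (by simp)
      · rintro rfl
        exact Relation.ReflTransGen.refl
    simp [rankSet, hlev, g]
  have hsQ : ∀ i, rankSet M w g i ∈ Qk M k := by
    rintro i ⟨l, n⟩ ⟨hv, hn⟩
    have hn : n = g i l := hn
    subst hn
    exact hg1 i l hv
  have hsub : ∀ i, oblSet M w k g i ⊆ rankSet M w g i := by
    intro i
    induction i with
    | zero => simp [oblSet]
    | succ i ih =>
      by_cases h : oblSet M w k g i = ∅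
      · simp only [oblSet, h, if_true]
        exact Set.sdiff_subset
      · simp only [oblSet, h, if_false]
        rintro x ⟨⟨hx, y, hy, hxy⟩, -⟩
        exact ⟨vert_edge (ih hy).1 ⟨rfl, hxy⟩, hx⟩
  have hstep : ∀ i, kvStep M (w i) (rankSet M w g i) (rankSet M w g (i + 1)) := by
    rintro i ⟨l, n⟩ ⟨hv, hn⟩ l' hl'
    refine ⟨g (i + 1) l', ?_, vert_edge hv ⟨rfl, hl'⟩, rfl⟩
    rw [hn]
    exact hg2 i l l' hv hl'
  refine ⟨fun i => (rankSet M w g i, oblSet M w k g i), by simp [hs0, oblSet], fun i => ?_,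
    fun n => ?_⟩
  · by_cases h : oblSet M w k g i = ∅
    · simp only [KVMH, h, if_true]
      exact ⟨_, hsQ (i + 1), by simp [oblSet, h], hstep i⟩
    · simp only [KVMH, h, if_false]
      refine ⟨_, hsQ (i + 1), {x | x.2 = g (i + 1) x.1 ∧
        ∃ y ∈ oblSet M w k g i, x.1 ∈ M.delta y.1 (w i)}, ?_, ?_, hstep i, ?_⟩
      · rw [oblSet, if_neg h]
      · rintro x ⟨hx, y, hy, hxy⟩
        exact ⟨vert_edge (hsub i hy).1 ⟨rfl, hxy⟩, hx⟩
      · rintro x hx l' hl'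
        refine ⟨g (i + 1) l', ?_, rfl, x, hx, hl'⟩
        rw [(hsub i hx).2]
        exact hg2 i _ l' (hsub i hx).1 hl'
  · by_contra! hcon
    have hne : ∀ i ≥ n, oblSet M w k g i ≠ ∅ := hcon
    -- Time `0` is skipped: there `g` differs from `f`.
    obtain ⟨p, hp⟩ := konig (fun i => {l | ∃ m, (l, m) ∈ oblSet M w k g (n + 1 + i)})
      (fun i l l' => l' ∈ M.delta l (w (n + 1 + i)))
      (fun i => by
        obtain ⟨x, hx⟩ := Set.nonempty_iff_ne_empty.2 (hne (n + 1 + i) (by omega))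
        exact ⟨x.1, x.2, hx⟩)
      (fun i l hl => by
        obtain ⟨m, hm⟩ := hl
        rw [← Nat.add_assoc, oblSet, if_neg (hne (n + 1 + i) (by omega))] at hm
        obtain ⟨⟨-, y, hy, hly⟩, -⟩ := hm
        exact ⟨y.1, ⟨y.2, hy⟩, hly⟩)
    obtain ⟨i, hi⟩ := hf3 (fun i => (n + 1 + i, p i)) (fun i => by
      obtain ⟨⟨m, hm⟩, hE⟩ := hp i
      exact ⟨(hsub _ hm).1, rfl, hE⟩)
    obtain ⟨m, hm⟩ := (hp i).1
    have hmg : m = g (n + 1 + i) (p i) := (hsub _ hm).2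
    have hmf : m = f (n + 1 + i, p i) := by
      rw [hmg]
      simp [g]
    have hmk : m ≤ k := (hsQ _ _ (hsub _ hm)).1
    have hnot : (p i, m) ∉ kvOdd Q k := by
      rw [show n + 1 + i = (n + i) + 1 by omega, oblSet, if_neg (hne (n + i) (by omega))] at hm
      exact hm.2
    rw [← hmf] at hi
    exact hnot ⟨Nat.not_even_iff_odd.1 hi, hmk⟩

end Compl

end KVProof

/-- `A` is universal iff `⟨{(ι,k)}, ∅⟩ ∉ ν y · μ x · (Pre(x) ∪ (Pre(y) ∩ α'))`
in `KVMH(A)` for `k = 2(|L| - |α|)`. -/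
theorem universal_iff_fix {Q A : Type*} [Fintype Q] [Fintype A] (M : NBW Q A) (k : ℕ)
    (hk : k = 2 * (Fintype.card Q - M.acc.ncard)) :
    M.Lang = Set.univ ↔
      (({(M.init, k)}, (∅ : Set (Q × ℕ))) : Set (Q × ℕ) × Set (Q × ℕ)) ∉
        (KVMH M k).FixF := by
  have hk' : k = 2 * (M.acc)ᶜ.ncard := by
    rw [hk, Set.ncard_compl, Nat.card_eq_fintype_card]
  rw [KVProof.mem_fixF_iff]
  constructor
  · rintro huniv ⟨w, P, hP0, hP, hacc⟩
    exact KVProof.sound hP0 hP hacc (huniv ▸ Set.mem_univ w)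
  · intro hno
    rw [Set.eq_univ_iff_forall]
    intro w
    by_contra hw
    exact hno ⟨w, KVProof.complete hk' hw⟩
end
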